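/- arXiv:2411.04922 — 3 statements merged into one kernel-verified Lean document; each statement's English description precedes it below -/
import Mathlib

section
/- Let X̂ solve the fixed-point problem and define n(t,x,p) = n₀(X₀(X̂(t,x,p) − v(p)t, p), p). Then the extended space-derivative of X̂ satisfies ∂̌X̂(t,x,p)/∂̌x = 1^dr(t,x,p) for all t,x,p, where 1^dr(t,x,·) is the dressing of the constant 1 with respect to n(t,x,·); consequently, for all t, all x > y, and all p: (X̂(t,x,p) − X̂(t,y,p))/(x−y) ≥ R(κ₀) > 0, so X̂(t,·,p) is strictly increasing and a homeomorphism of ℝ. -/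
open MeasureTheory

/-!
The difference quotients of the flow `X̂(t, ·, p)` themselves solve a dressing equation, in which
the density is replaced by its mean between the two flow lines. Since that mean is again between `0`
and `sup_x n₀`, the bounds for the dressing of `1` make the flow Lipschitz and bound its difference
quotients below by `R(κ₀) > 0`. The lower bound makes preimages of null sets null sets, so by
Lebesgue differentiation the mean densities converge, for almost every `x`, to the density at
almost every momentum. By the reverse Fatou lemma and the contraction property, the dressing depends
continuously on its kernel. Hence the difference quotients converge to `1^dr`, which is therefore
the derivative of the flow almost everywhere; absolute continuity turns this into the integral
identity.
-/

open Filter Set Topology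
open scoped ENNReal

section Slope

variable {h : ℝ → ℝ}

lemma lipschitzWith_of_abs_slope_le {L : ℝ} (hh : ∀ x y, x ≠ y → |slope h x y| ≤ L) :
    LipschitzWith L.toNNReal h := by
  refine LipschitzWith.of_dist_le' fun x y => ?_
  rcases eq_or_ne x y with rfl | hne
  · simp only [dist_self, mul_zero, le_refl]
  · rw [dist_comm (h x), dist_comm x, Real.dist_eq, Real.dist_eq,
      ← div_le_iff₀ (abs_pos.2 (sub_ne_zero.2 hne.symm)), ← abs_div, ← slope_def_field]
    exact hh x y hne

lemma antilipschitzWith_of_le_slope {c : ℝ} (hc : 0 < c)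
    (hh : ∀ x y, x ≠ y → c ≤ slope h x y) : AntilipschitzWith c⁻¹.toNNReal h := by
  refine AntilipschitzWith.of_le_mul_dist fun x y => ?_
  rw [Real.coe_toNNReal _ (inv_nonneg.2 hc.le)]
  rcases eq_or_ne x y with rfl | hne
  · simp only [dist_self, mul_zero, le_refl]
  · have hxy : c ≤ |h y - h x| / |y - x| := by
      rw [← abs_div, ← slope_def_field]
      exact (hh x y hne).trans (le_abs_self _)
    rw [le_div_iff₀ (abs_pos.2 (sub_ne_zero.2 hne.symm))] at hxy
    rwa [dist_comm x, dist_comm (h x), Real.dist_eq, Real.dist_eq, inv_mul_eq_div,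
      le_div_iff₀' hc]

lemma strictMono_of_le_slope {c : ℝ} (hc : 0 < c) (hh : ∀ x y, x ≠ y → c ≤ slope h x y) :
    StrictMono h := fun x y hxy =>
  (slope_pos_iff_of_le hxy.le).1 (hc.trans_le (hh x y hxy.ne))

lemma surjective_of_le_slope {c : ℝ} (hc : 0 < c) (hh : ∀ x y, x ≠ y → c ≤ slope h x y)
    (hcont : Continuous h) : Function.Surjective h := by
  refine hcont.surjective ?_ ?_
  · refine tendsto_atTop_mono' _ ?_
      (tendsto_atTop_add_const_right _ (h 0) (tendsto_id.const_mul_atTop hc))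
    filter_upwards [eventually_gt_atTop 0] with x hx
    have hslope := hh 0 x hx.ne
    rw [slope_def_field, sub_zero, le_div_iff₀ hx] at hslope
    exact le_sub_iff_add_le.1 hslope
  · refine tendsto_atBot_mono' _ ?_
      (tendsto_atBot_add_const_right _ (h 0) (tendsto_id.const_mul_atBot hc))
    filter_upwards [eventually_lt_atBot 0] with x hx
    have hslope := hh 0 x hx.ne'
    rw [slope_def_field, sub_zero, le_div_iff_of_neg hx] at hslope
    exact sub_le_iff_le_add.1 hslope

lemma ae_comp_of_antilipschitzWith {C : NNReal} (hh : AntilipschitzWith C h) {Q : ℝ → Prop}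
    (hQ : ∀ᵐ y, Q y) : ∀ᵐ x, Q (h x) := by
  rw [ae_iff] at hQ ⊢
  have hle := hh.hausdorffMeasure_preimage_le (d := 1) zero_le_one {y | ¬Q y}
  rw [hausdorffMeasure_real, hQ, mul_zero] at hle
  exact le_antisymm hle zero_le

lemma tendsto_add_nhdsNE {δ : ℕ → ℝ} (hδ : Tendsto δ atTop (𝓝[≠] 0)) (x : ℝ) :
    Tendsto (fun k => x + δ k) atTop (𝓝[≠] x) := by
  rw [tendsto_nhdsWithin_iff] at hδ ⊢
  refine ⟨by simpa only [add_zero] using hδ.1.const_add x, hδ.2.mono fun k hk => ?_⟩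
  simpa only [mem_compl_iff, mem_singleton_iff, add_eq_left] using hk

lemma integral_eq_sub_of_tendsto_slope {h' : ℝ → ℝ} {L : NNReal} (hh : LipschitzWith L h)
    {δ : ℕ → ℝ} (hδ : Tendsto δ atTop (𝓝[≠] 0))
    (hlim : ∀ᵐ x, Tendsto (fun k => slope h x (x + δ k)) atTop (𝓝 (h' x))) (a b : ℝ) :
    ∫ x in a..b, h' x = h b - h a := by
  rw [← (hh.lipschitzOnWith (s := uIcc a b)).absolutelyContinuousOnInterval.integral_deriv_eq_sub]
  refine intervalIntegral.integral_congr_ae ?_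
  filter_upwards [hlim, hh.ae_differentiableAt_real] with x hx hdiff _
  exact tendsto_nhds_unique hx
    ((hasDerivAt_iff_tendsto_slope.1 hdiff.hasDerivAt).comp (tendsto_add_nhdsNE hδ x))

end Slope

lemma le_div_one_sub_of_contracting {ι : Type*} {g : ι → ℝ} {a κ : ℝ} (ha : 0 ≤ a) (hκ₀ : 0 ≤ κ)
    (hκ : κ < 1) (hg : BddAbove (range g))
    (hcontr : ∀ b, 0 ≤ b → (∀ i, g i ≤ b) → ∀ i, g i ≤ a + κ * b) (i : ι) :
    g i ≤ a / (1 - κ) := by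
  have : Nonempty ι := ⟨i⟩
  set s := max (⨆ j, g j) 0
  have hs₀ : 0 ≤ s := le_max_right _ _
  have hgs : ∀ j, g j ≤ s := fun j => (le_ciSup hg j).trans (le_max_left _ _)
  have hs : s ≤ a + κ * s := max_le (ciSup_le (hcontr s hs₀ hgs)) (by positivity)
  refine (hgs i).trans ((le_div_iff₀ (sub_pos.2 hκ)).2 ?_)
  linarith

lemma limsup_lintegral_le_of_aemeasurable {α : Type*} [MeasurableSpace α] {μ : Measure α}
    {f : ℕ → α → ℝ≥0∞} (g : α → ℝ≥0∞) (hf : ∀ n, AEMeasurable (f n) μ)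
    (hbound : ∀ n, f n ≤ᵐ[μ] g) (hfin : ∫⁻ x, g x ∂μ ≠ ∞) :
    limsup (fun n => ∫⁻ x, f n x ∂μ) atTop ≤ ∫⁻ x, limsup (fun n => f n x) atTop ∂μ := by
  have hmk : ∀ᵐ x ∂μ, ∀ n, f n x = (hf n).mk (f n) x := ae_all_iff.2 fun n => (hf n).ae_eq_mk
  calc limsup (fun n => ∫⁻ x, f n x ∂μ) atTop
      = limsup (fun n => ∫⁻ x, (hf n).mk (f n) x ∂μ) atTop := by
        simp only [lintegral_congr_ae (hf _).ae_eq_mk]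
    _ ≤ ∫⁻ x, limsup (fun n => (hf n).mk (f n) x) atTop ∂μ :=
        limsup_lintegral_le g (fun n => (hf n).measurable_mk)
          (fun n => (hf n).ae_eq_mk.symm.le.trans (hbound n)) hfin
    _ = ∫⁻ x, limsup (fun n => f n x) atTop ∂μ := by
        refine lintegral_congr_ae ?_
        filter_upwards [hmk] with x hx
        simp only [hx]

/-- `R` is the lower bound `R(κ)` for the dressing of the constant `1` by a kernel of norm `κ`:
`1 - κ` when the kernel has a fixed sign and `(1 - 2κ) / (1 - κ)` otherwise, with `κ` restricted
so that `R` is positive. -/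
def IsDressingLowerBound {P : Type*} (K : P → P → ℝ) (κ R : ℝ) : Prop :=
  (((∀ p q, 0 ≤ K p q) ∨ (∀ p q, K p q ≤ 0)) ∧ κ < 1 ∧ R = 1 - κ) ∨
    (κ < 1 / 2 ∧ R = (1 - 2 * κ) / (1 - κ))

namespace IsDressingLowerBound

variable {P : Type*} {K : P → P → ℝ} {κ R : ℝ}

lemma lt_one (hR : IsDressingLowerBound K κ R) : κ < 1 := by
  rcases hR with ⟨-, hκ, -⟩ | ⟨hκ, -⟩ <;> linarith

lemma pos (hR : IsDressingLowerBound K κ R) : 0 < R := by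
  rcases hR with ⟨-, hκ, rfl⟩ | ⟨hκ, rfl⟩
  · exact sub_pos.2 hκ
  · exact div_pos (by linarith) (by linarith)

lemma mul_weight (hR : IsDressingLowerBound K κ R) {w : P → ℝ} (hw : ∀ q, 0 ≤ w q) :
    IsDressingLowerBound (fun p q => K p q * w q) κ R :=
  hR.imp_left <| And.imp_left <| Or.imp
    (fun hK p q => mul_nonneg (hK p q) (hw q))
    (fun hK p q => mul_nonpos_of_nonpos_of_nonneg (hK p q) (hw q))

end IsDressingLowerBound

section Dressing

variable {P : Type*} [MeasurableSpace P] {μ : Measure P} {K : P → P → ℝ} {g f : P → ℝ} {κ : ℝ}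

/-- The integral operator `f ↦ ∫ q, K p q * f q ∂μ` acts on bounded functions with sup-norm
at most `κ`. -/
structure KernelBound (μ : Measure P) (K : P → P → ℝ) (κ : ℝ) : Prop where
  integrable : ∀ p, Integrable (K p) μ
  integral_abs_le : ∀ p, ∫ q, |K p q| ∂μ ≤ κ

/-- `f` is the dressing `g^dr` of `g` by the kernel `K`, i.e. the bounded measurable solution of
`f = g + K f`. In the dressing with respect to a density `n` one takes `K p q = T p q * n q`. -/
structure IsDressing (μ : Measure P) (K : P → P → ℝ) (g f : P → ℝ) : Prop where
  measurable : Measurable f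
  bounded : ∃ B, ∀ q, |f q| ≤ B
  eq : ∀ p, f p = g p + ∫ q, K p q * f q ∂μ

namespace KernelBound

lemma nonneg (hK : KernelBound μ K κ) (p : P) : 0 ≤ κ :=
  (integral_nonneg fun _ => abs_nonneg _).trans (hK.integral_abs_le p)

lemma mono (hK : KernelBound μ K κ) {K' : P → P → ℝ} (hm : ∀ p, AEStronglyMeasurable (K' p) μ)
    (hle : ∀ p q, |K' p q| ≤ |K p q|) : KernelBound μ K' κ where
  integrable p := (hK.integrable p).mono (hm p) (.of_forall (hle p))
  integral_abs_le p := (integral_mono_of_nonneg (.of_forall fun _ => abs_nonneg _)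
    (hK.integrable p).abs (.of_forall (hle p))).trans (hK.integral_abs_le p)

lemma integral_mul_le (hK : KernelBound μ K κ) {b : ℝ} (hb : 0 ≤ b) {p : P}
    (hf : ∀ q, K p q * f q ≤ |K p q| * b) : ∫ q, K p q * f q ∂μ ≤ κ * b := by
  by_cases hint : Integrable (fun q => K p q * f q) μ
  · calc ∫ q, K p q * f q ∂μ ≤ ∫ q, |K p q| * b ∂μ :=
          integral_mono hint ((hK.integrable p).abs.mul_const b) hf
      _ = (∫ q, |K p q| ∂μ) * b := integral_mul_const _ _
      _ ≤ κ * b := mul_le_mul_of_nonneg_right (hK.integral_abs_le p) hb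
  · rw [integral_undef hint]
    exact mul_nonneg (hK.nonneg p) hb

lemma neg_le_integral_mul (hK : KernelBound μ K κ) {b : ℝ} (hb : 0 ≤ b) {p : P}
    (hf : ∀ q, -(|K p q| * b) ≤ K p q * f q) : -(κ * b) ≤ ∫ q, K p q * f q ∂μ := by
  have hneg := hK.integral_mul_le (f := fun q => -f q) hb fun q => by
    simpa only [mul_neg] using neg_le.1 (hf q)
  simp only [mul_neg, integral_neg] at hneg
  exact neg_le.1 hneg

lemma abs_integral_mul_le (hK : KernelBound μ K κ) {b : ℝ} (hf : ∀ q, |f q| ≤ b) (p : P) :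
    |∫ q, K p q * f q ∂μ| ≤ κ * b := by
  have hb : 0 ≤ b := (abs_nonneg _).trans (hf p)
  have hKf : ∀ q, |K p q * f q| ≤ |K p q| * b := fun q => by
    rw [abs_mul]
    exact mul_le_mul_of_nonneg_left (hf q) (abs_nonneg _)
  exact abs_le.2 ⟨hK.neg_le_integral_mul hb fun q => neg_le_of_abs_le (hKf q),
    hK.integral_mul_le hb fun q => le_of_abs_le (hKf q)⟩

lemma lintegral_enorm_le (hK : KernelBound μ K κ) (p : P) :
    ∫⁻ q, ‖K p q‖ₑ ∂μ ≤ ENNReal.ofReal κ := by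
  rw [← ofReal_integral_norm_eq_lintegral_enorm (hK.integrable p)]
  exact ENNReal.ofReal_le_ofReal (hK.integral_abs_le p)

end KernelBound

namespace IsDressing

lemma integrable_mul (hf : IsDressing μ K g f) {k : P → ℝ} (hk : Integrable k μ) :
    Integrable (fun q => k q * f q) μ :=
  hf.bounded.elim fun _ hB => hk.mul_bdd hf.measurable.aestronglyMeasurable (.of_forall hB)

lemma abs_le (hK : KernelBound μ K κ) (hκ : κ < 1) (hf : IsDressing μ K g f) {a : ℝ}
    (hg : ∀ q, |g q| ≤ a) (p : P) : |f p| ≤ a / (1 - κ) := by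
  obtain ⟨B, hB⟩ := hf.bounded
  refine le_div_one_sub_of_contracting (g := fun q => |f q|) ((abs_nonneg _).trans (hg p))
    (hK.nonneg p) hκ ⟨B, forall_mem_range.2 hB⟩ (fun b _ hfb q => ?_) p
  rw [hf.eq q]
  exact (abs_add_le _ _).trans (add_le_add (hg q) (hK.abs_integral_mul_le hfb q))

lemma nonneg_of_contracting (hK : KernelBound μ K κ) (hκ : κ < 1) (hf : IsDressing μ K g f)
    (hcontr : ∀ b, 0 ≤ b → (∀ q, -b ≤ f q) → ∀ p, -(κ * b) ≤ f p) (p : P) : 0 ≤ f p := by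
  obtain ⟨B, hB⟩ := hf.bounded
  have hle := le_div_one_sub_of_contracting (g := fun q => -f q) le_rfl (hK.nonneg p) hκ
    ⟨B, forall_mem_range.2 fun q => (neg_le_abs _).trans (hB q)⟩
    (fun b hb hfb q => by
      rw [zero_add]
      exact neg_le.1 (hcontr b hb (fun q => neg_le.1 (hfb q)) q)) p
  rwa [zero_div, neg_nonpos] at hle

lemma one_sub_le_of_nonneg (hK : KernelBound μ K κ) (hκ : κ < 1) (hK₀ : ∀ p q, 0 ≤ K p q)
    (hf : IsDressing μ K 1 f) (p : P) : 1 - κ ≤ f p := by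
  have hlower : ∀ b, 0 ≤ b → (∀ q, -b ≤ f q) → ∀ p, 1 - κ * b ≤ f p := fun b hb hfb p => by
    rw [hf.eq p, Pi.one_apply, sub_eq_add_neg]
    refine add_le_add_right (hK.neg_le_integral_mul hb fun q => ?_) 1
    rw [abs_of_nonneg (hK₀ p q), ← mul_neg]
    exact mul_le_mul_of_nonneg_left (hfb q) (hK₀ p q)
  have hf₀ : ∀ p, 0 ≤ f p := hf.nonneg_of_contracting hK hκ fun b hb hfb p => by
    linarith [hlower b hb hfb p]
  linarith [hlower 0 le_rfl (fun q => by simpa only [neg_zero] using hf₀ q) p, hK.nonneg p]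

lemma one_sub_le_of_nonpos (hK : KernelBound μ K κ) (hκ : κ < 1) (hK₀ : ∀ p q, K p q ≤ 0)
    (hf : IsDressing μ K 1 f) (p : P) : 1 - κ ≤ f p := by
  have hupper : ∀ b, 0 ≤ b → (∀ q, -b ≤ f q) → ∀ p, f p ≤ 1 + κ * b := fun b hb hfb p => by
    rw [hf.eq p, Pi.one_apply]
    refine add_le_add_right (hK.integral_mul_le hb fun q => ?_) 1
    rw [abs_of_nonpos (hK₀ p q), neg_mul_comm]
    exact mul_le_mul_of_nonpos_left (hfb q) (hK₀ p q)
  have hlower : ∀ b, 0 ≤ b → (∀ q, f q ≤ b) → ∀ p, 1 - κ * b ≤ f p := fun b hb hfb p => by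
    rw [hf.eq p, Pi.one_apply, sub_eq_add_neg]
    refine add_le_add_right (hK.neg_le_integral_mul hb fun q => ?_) 1
    rw [abs_of_nonpos (hK₀ p q), neg_mul, neg_neg]
    exact mul_le_mul_of_nonpos_left (hfb q) (hK₀ p q)
  have hκ₀ : 0 ≤ κ := hK.nonneg p
  have hf₀ : ∀ p, 0 ≤ f p := hf.nonneg_of_contracting hK hκ fun b hb hfb p => by
    have htwice := hlower (1 + κ * b) (by positivity) (hupper b hb hfb) p
    have hκb : κ * (κ * b) ≤ 1 * (κ * b) := mul_le_mul_of_nonneg_right hκ.le (by positivity)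
    linarith
  have hf₁ : ∀ p, f p ≤ 1 := fun p => by
    simpa only [mul_zero, add_zero] using
      hupper 0 le_rfl (fun q => by simpa only [neg_zero] using hf₀ q) p
  simpa only [mul_one] using hlower 1 zero_le_one hf₁ p

lemma one_sub_two_mul_div_le (hK : KernelBound μ K κ) (hκ : κ < 1) (hf : IsDressing μ K 1 f)
    (p : P) : (1 - 2 * κ) / (1 - κ) ≤ f p := by
  have hKf := hK.abs_integral_mul_le (hf.abs_le hK hκ (a := 1) fun _ => by simp) p
  have hκ' : 1 - κ ≠ 0 := (sub_pos.2 hκ).ne'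
  calc (1 - 2 * κ) / (1 - κ) = 1 - κ * (1 / (1 - κ)) := by field_simp; ring
    _ ≤ 1 + ∫ q, K p q * f q ∂μ := by linarith [neg_le_of_abs_le hKf]
    _ = f p := (hf.eq p).symm

lemma lowerBound_le (hK : KernelBound μ K κ) {R : ℝ} (hR : IsDressingLowerBound K κ R)
    (hf : IsDressing μ K 1 f) (p : P) : R ≤ f p := by
  have hκ := hR.lt_one
  rcases hR with ⟨hK₀ | hK₀, -, rfl⟩ | ⟨-, rfl⟩
  · exact hf.one_sub_le_of_nonneg hK hκ hK₀ p
  · exact hf.one_sub_le_of_nonpos hK hκ hK₀ p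
  · exact hf.one_sub_two_mul_div_le hK hκ p

lemma sub_of_kernels (hK : KernelBound μ K κ) {K' : P → P → ℝ} {κ' : ℝ} (hK' : KernelBound μ K' κ')
    {f' : P → ℝ} (hf : IsDressing μ K g f) (hf' : IsDressing μ K' g f') :
    IsDressing μ K (fun p => ∫ q, (K p q - K' p q) * f' q ∂μ) (fun p => f p - f' p) where
  measurable := hf.measurable.sub hf'.measurable
  bounded := by
    obtain ⟨B, hB⟩ := hf.bounded
    obtain ⟨B', hB'⟩ := hf'.bounded
    exact ⟨B + B', fun q => (abs_sub _ _).trans (add_le_add (hB q) (hB' q))⟩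
  eq p := by
    have hint := hf.integrable_mul (hK.integrable p)
    have hint₁ := hf'.integrable_mul (hK.integrable p)
    have hint₂ := hf'.integrable_mul (hK'.integrable p)
    simp only [hf.eq p, hf'.eq p, sub_mul, mul_sub, integral_sub hint₁ hint₂,
      integral_sub hint hint₁]
    ring

section Limit

variable {k : ℕ → P → P → ℝ} {e d f : ℕ → P → ℝ} {f' : P → ℝ} {B : ℝ}

lemma limsup_enorm_le_lintegral (hK : ∀ p, Integrable (K p) μ)
    (hk : ∀ n p q, |k n p q| ≤ |K p q|) (hd : ∀ n, IsDressing μ (k n) (e n) (d n))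
    {C : ℝ≥0∞} (hC : C ≠ ∞) (hdC : ∀ n q, ‖d n q‖ₑ ≤ C)
    (he : ∀ p, Tendsto (fun n => e n p) atTop (𝓝 0)) (p : P) :
    limsup (fun n => ‖d n p‖ₑ) atTop ≤
      ∫⁻ q, ‖K p q‖ₑ * limsup (fun n => ‖d n q‖ₑ) atTop ∂μ := by
  have hstep : ∀ n, ‖d n p‖ₑ ≤ ‖e n p‖ₑ + ∫⁻ q, ‖K p q‖ₑ * ‖d n q‖ₑ ∂μ := fun n => by
    rw [(hd n).eq p]
    refine (enorm_add_le _ _).trans (add_le_add_right ?_ _)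
    refine (enorm_integral_le_lintegral_enorm _).trans (lintegral_mono fun q => ?_)
    rw [enorm_mul]
    exact mul_le_mul_left (enorm_le_iff_norm_le.2 (hk n p q)) _
  calc limsup (fun n => ‖d n p‖ₑ) atTop
      ≤ limsup ((fun n => ‖e n p‖ₑ) + fun n => ∫⁻ q, ‖K p q‖ₑ * ‖d n q‖ₑ ∂μ) atTop :=
        limsup_le_limsup (.of_forall hstep)
    _ = limsup (fun n => ∫⁻ q, ‖K p q‖ₑ * ‖d n q‖ₑ ∂μ) atTop :=
        ENNReal.limsup_add_of_left_tendsto_zero (by simpa using (he p).enorm) _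
    _ ≤ ∫⁻ q, limsup (fun n => ‖K p q‖ₑ * ‖d n q‖ₑ) atTop ∂μ := by
        refine limsup_lintegral_le_of_aemeasurable (fun q => ‖K p q‖ₑ * C)
          (fun n => (hK p).aemeasurable.enorm.mul (hd n).measurable.aemeasurable.enorm)
          (fun n => .of_forall fun q => mul_le_mul_right (hdC n q) _) ?_
        rw [lintegral_mul_const' _ _ hC]
        exact ENNReal.mul_ne_top (hK p).2.ne hC
    _ = ∫⁻ q, ‖K p q‖ₑ * limsup (fun n => ‖d n q‖ₑ) atTop ∂μ := by
        simp only [ENNReal.limsup_const_mul_of_ne_top enorm_ne_top]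

lemma tendsto_zero (hK : KernelBound μ K κ) (hκ : κ < 1) (hk : ∀ n p q, |k n p q| ≤ |K p q|)
    (hd : ∀ n, IsDressing μ (k n) (e n) (d n)) (hB : ∀ n q, |d n q| ≤ B)
    (he : ∀ p, Tendsto (fun n => e n p) atTop (𝓝 0)) (p : P) :
    Tendsto (fun n => d n p) atTop (𝓝 0) := by
  set D : P → ℝ≥0∞ := fun q => limsup (fun n => ‖d n q‖ₑ) atTop
  have hdB : ∀ n q, ‖d n q‖ₑ ≤ ENNReal.ofReal B := fun n q =>
    (Real.enorm_eq_ofReal_abs _).trans_le (ENNReal.ofReal_le_ofReal (hB n q))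
  have hDsup : ⨆ q, D q ≤ ENNReal.ofReal κ * ⨆ q, D q := iSup_le fun p => calc
    D p ≤ ∫⁻ q, ‖K p q‖ₑ * D q ∂μ :=
        limsup_enorm_le_lintegral hK.integrable hk hd ENNReal.ofReal_ne_top hdB he p
    _ ≤ ∫⁻ q, ‖K p q‖ₑ * ⨆ q, D q ∂μ :=
        lintegral_mono fun q => mul_le_mul_right (le_iSup D q) _
    _ ≤ ENNReal.ofReal κ * ⨆ q, D q := by
        rw [lintegral_mul_const'' _ (hK.integrable p).aemeasurable.enorm]
        exact mul_le_mul_left (hK.lintegral_enorm_le p) _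
  have hDtop : ⨆ q, D q ≠ ∞ := ne_top_of_le_ne_top ENNReal.ofReal_ne_top <| iSup_le fun q =>
    limsup_le_of_le (h := .of_forall fun n => hdB n q)
  have hD₀ : ⨆ q, D q = 0 := by
    by_contra hne
    have hlt := ENNReal.mul_lt_mul_left hne hDtop (ENNReal.ofReal_lt_one.2 hκ)
    rw [one_mul] at hlt
    exact hDsup.not_gt hlt
  rw [tendsto_zero_iff_enorm_tendsto_zero]
  exact tendsto_of_le_liminf_of_limsup_le bot_le ((le_iSup D p).trans hD₀.le)

theorem tendsto (hK : KernelBound μ K κ) (hκ : κ < 1) (hkm : ∀ n p, AEStronglyMeasurable (k n p) μ)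
    (hk : ∀ n p q, |k n p q| ≤ |K p q|) {K' : P → P → ℝ} (hK' : KernelBound μ K' κ)
    (hlim : ∀ p, ∀ᵐ q ∂μ, Tendsto (fun n => k n p q) atTop (𝓝 (K' p q)))
    (hf : ∀ n, IsDressing μ (k n) g (f n)) (hB : ∀ n q, |f n q| ≤ B)
    (hf' : IsDressing μ K' g f') (p : P) : Tendsto (fun n => f n p) atTop (𝓝 (f' p)) := by
  obtain ⟨B', hB'⟩ := hf'.bounded
  rw [← tendsto_sub_nhds_zero_iff]
  refine tendsto_zero hK hκ hk (fun n => (hf n).sub_of_kernels (hK.mono (hkm n) (hk n)) hK' hf')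
    (fun n q => (abs_sub _ _).trans (add_le_add (hB n q) (hB' q))) (fun p => ?_) p
  rw [← integral_zero P ℝ (μ := μ)]
  refine tendsto_integral_of_dominated_convergence (fun q => (|K p q| + |K' p q|) * |B'|)
    (fun n => ((hkm n p).sub (hK'.integrable p).1).mul hf'.measurable.aestronglyMeasurable)
    (((hK.integrable p).abs.add (hK'.integrable p).abs).mul_const _)
    (fun n => .of_forall fun q => ?_) ?_
  · rw [norm_mul, Real.norm_eq_abs, Real.norm_eq_abs]
    exact mul_le_mul ((abs_sub _ _).trans (add_le_add_left (hk n p q) _))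
      ((hB' q).trans (le_abs_self _)) (abs_nonneg _) (by positivity)
  · filter_upwards [hlim p] with q hq
    simpa only [sub_self, zero_mul] using (hq.sub_const (K' p q)).mul_const (f' q)

end Limit
end IsDressing

end Dressing

section Flow

lemma slope_integral_mem_Icc {ρ : ℝ → ℝ} {s : ℝ} (hρ : ∀ a b, IntervalIntegrable ρ volume a b)
    (hρ₀ : ∀ y, 0 ≤ ρ y) (hρs : ∀ y, ρ y ≤ s) (c a b : ℝ) :
    slope (fun x => ∫ y in c..x, ρ y) a b ∈ Icc 0 s := by
  wlog hab : a ≤ b generalizing a b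
  · rw [slope_comm]
    exact this b a (le_of_not_ge hab)
  rw [slope_def_field, intervalIntegral.integral_interval_sub_left (hρ _ _) (hρ _ _)]
  refine ⟨div_nonneg (intervalIntegral.integral_nonneg hab fun y _ => hρ₀ y) (sub_nonneg.2 hab),
    div_le_of_le_mul₀ (sub_nonneg.2 hab) ((hρ₀ 0).trans (hρs 0)) ?_⟩
  calc ∫ y in a..b, ρ y ≤ ∫ _ in a..b, s :=
        intervalIntegral.integral_mono_on hab (hρ a b) intervalIntegrable_const fun y _ => hρs y
    _ = s * (b - a) := by rw [intervalIntegral.integral_const, smul_eq_mul, mul_comm]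

variable {P : Type*}

/-- The cumulative density `N₀` in free coordinates, `m y q` being the density of particles with
momentum `q` at the free position `y`. -/
noncomputable def cumulativeDensity (m : ℝ → P → ℝ) (a : ℝ) (q : P) : ℝ :=
  ∫ y in (0 : ℝ)..a, m y q

/-- The mean of the density of momentum `q` over the free positions between the flow lines that
start from `x` and from `y`. It replaces the density in the dressing equation when derivatives of
the flow are replaced by difference quotients. -/
noncomputable def meanDensity (m : ℝ → P → ℝ) (u : P → ℝ) (X : ℝ → P → ℝ) (x y : ℝ) (q : P) : ℝ :=
  slope (fun a => cumulativeDensity m a q) (X x q - u q) (X y q - u q)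

variable [MeasurableSpace P] {μ : Measure P} {T : P → P → ℝ} {m : ℝ → P → ℝ} {S u : P → ℝ}
  {X f : ℝ → P → ℝ} {κ R : ℝ}

/-- The standing assumptions at a fixed time `t`: `T` is the scattering kernel, `m y q` the density
`n₀ (X₀ y q) q` in free coordinates, `S q` a bound of it such as `sup_x n₀ x q`, and `u q` the free
displacement `v q * t`. -/
structure FlowAssumptions (μ : Measure P) (T : P → P → ℝ) (m : ℝ → P → ℝ) (S u : P → ℝ) (κ : ℝ) :
    Prop where
  integrable_kernel : ∀ p, Integrable (T p) μ
  kernelBound : KernelBound μ (fun p q => T p q * S q) κ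
  measurable_density : Measurable (Function.uncurry m)
  density_nonneg : ∀ y q, 0 ≤ m y q
  density_le : ∀ y q, m y q ≤ S q
  weight_bounded : ∃ C, ∀ q, S q ≤ C
  measurable_shift : Measurable u
  shift_bounded : ∃ C, ∀ q, |u q| * S q ≤ C

/-- `X x p` is the solution `X̂(t, x, p)` of the fixed-point problem at a fixed time `t`. -/
structure IsFlow (μ : Measure P) (T : P → P → ℝ) (m : ℝ → P → ℝ) (u : P → ℝ) (X : ℝ → P → ℝ) :
    Prop where
  measurable : ∀ x, Measurable (X x)
  bounded : ∀ x, ∃ B, ∀ p, |X x p| ≤ B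
  eq : ∀ x p, X x p = x + ∫ q, T p q * cumulativeDensity m (X x q - u q) q ∂μ

namespace FlowAssumptions

lemma weight_nonneg (hA : FlowAssumptions μ T m S u κ) (q : P) : 0 ≤ S q :=
  (hA.density_nonneg 0 q).trans (hA.density_le 0 q)

lemma aestronglyMeasurable_mul (hA : FlowAssumptions μ T m S u κ) {w : P → ℝ}
    (hw : Measurable w) (p : P) : AEStronglyMeasurable (fun q => T p q * w q) μ :=
  (hA.integrable_kernel p).1.mul hw.aestronglyMeasurable

lemma abs_mul_le (hA : FlowAssumptions μ T m S u κ) {w : P → ℝ} (hwS : ∀ q, w q ∈ Icc 0 (S q))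
    (p q : P) : |T p q * w q| ≤ |T p q * S q| := by
  rw [abs_mul, abs_mul, abs_of_nonneg (hwS q).1, abs_of_nonneg (hA.weight_nonneg q)]
  exact mul_le_mul_of_nonneg_left (hwS q).2 (abs_nonneg _)

lemma kernelBound_mul (hA : FlowAssumptions μ T m S u κ) {w : P → ℝ} (hw : Measurable w)
    (hwS : ∀ q, w q ∈ Icc 0 (S q)) : KernelBound μ (fun p q => T p q * w q) κ :=
  hA.kernelBound.mono (hA.aestronglyMeasurable_mul hw) (hA.abs_mul_le hwS)

lemma locallyIntegrable_density (hA : FlowAssumptions μ T m S u κ) (q : P) :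
    LocallyIntegrable fun y => m y q := by
  refine (locallyIntegrable_const (S q)).mono
    (hA.measurable_density.comp measurable_prodMk_right).aestronglyMeasurable
    (.of_forall fun y => ?_)
  rw [Real.norm_of_nonneg (hA.density_nonneg y q), Real.norm_of_nonneg (hA.weight_nonneg q)]
  exact hA.density_le y q

lemma intervalIntegrable_density (hA : FlowAssumptions μ T m S u κ) (q : P) (a b : ℝ) :
    IntervalIntegrable (fun y => m y q) volume a b :=
  ((hA.locallyIntegrable_density q).integrableOn_isCompact isCompact_uIcc).intervalIntegrable

lemma measurable_uncurry_cumulativeDensity (hA : FlowAssumptions μ T m S u κ) :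
    Measurable (Function.uncurry (cumulativeDensity m)) := by
  refine measurable_uncurry_of_continuous_of_measurable
    (fun q => intervalIntegral.continuous_primitive (hA.intervalIntegrable_density q) 0)
    fun a => ?_
  have hm : StronglyMeasurable (Function.uncurry fun q y => m y q) :=
    (hA.measurable_density.comp measurable_swap).stronglyMeasurable
  exact (hm.integral_prod_right.sub hm.integral_prod_right).measurable

lemma abs_cumulativeDensity_le (hA : FlowAssumptions μ T m S u κ) (a : ℝ) (q : P) :
    |cumulativeDensity m a q| ≤ S q * |a| := by
  simpa only [cumulativeDensity, sub_zero, Real.norm_eq_abs] using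
    intervalIntegral.norm_integral_le_of_norm_le_const (a := 0) (b := a) fun y _ =>
      (Real.norm_of_nonneg (hA.density_nonneg y q)).trans_le (hA.density_le y q)

lemma meanDensity_mem_Icc (hA : FlowAssumptions μ T m S u κ) (x y : ℝ) (q : P) :
    meanDensity m u X x y q ∈ Icc 0 (S q) :=
  slope_integral_mem_Icc (hA.intervalIntegrable_density q) (hA.density_nonneg · q)
    (hA.density_le · q) 0 _ _

end FlowAssumptions

namespace IsFlow

lemma measurable_cumulativeDensity (hA : FlowAssumptions μ T m S u κ) (hX : IsFlow μ T m u X)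
    (x : ℝ) : Measurable fun q => cumulativeDensity m (X x q - u q) q :=
  hA.measurable_uncurry_cumulativeDensity.comp
    (((hX.measurable x).sub hA.measurable_shift).prodMk measurable_id)

lemma measurable_density (hA : FlowAssumptions μ T m S u κ) (hX : IsFlow μ T m u X) (x : ℝ) :
    Measurable fun q => m (X x q - u q) q :=
  hA.measurable_density.comp (((hX.measurable x).sub hA.measurable_shift).prodMk measurable_id)

lemma measurable_meanDensity (hA : FlowAssumptions μ T m S u κ) (hX : IsFlow μ T m u X)
    (x y : ℝ) : Measurable (meanDensity m u X x y) := by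
  unfold meanDensity
  simp only [slope_def_field, sub_sub_sub_cancel_right]
  exact ((hX.measurable_cumulativeDensity hA y).sub (hX.measurable_cumulativeDensity hA x)).div
    ((hX.measurable y).sub (hX.measurable x))

lemma integrable_mul_cumulativeDensity (hA : FlowAssumptions μ T m S u κ)
    (hX : IsFlow μ T m u X) (x : ℝ) (p : P) :
    Integrable (fun q => T p q * cumulativeDensity m (X x q - u q) q) μ := by
  obtain ⟨B, hB⟩ := hX.bounded x
  obtain ⟨C, hC⟩ := hA.weight_bounded
  obtain ⟨C', hC'⟩ := hA.shift_bounded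
  have hB₀ : 0 ≤ B := (abs_nonneg _).trans (hB p)
  refine (hA.integrable_kernel p).mul_bdd (c := C * B + C')
    (hX.measurable_cumulativeDensity hA x).aestronglyMeasurable (.of_forall fun q => ?_)
  calc |cumulativeDensity m (X x q - u q) q| ≤ S q * |X x q - u q| :=
        hA.abs_cumulativeDensity_le _ q
    _ ≤ S q * (B + |u q|) := mul_le_mul_of_nonneg_left
        ((abs_sub _ _).trans (add_le_add_left (hB q) _)) (hA.weight_nonneg q)
    _ = S q * B + |u q| * S q := by ring
    _ ≤ C * B + C' := add_le_add (mul_le_mul_of_nonneg_right (hC q) hB₀) (hC' q)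

-- The increment of `N₀` along the flow is the mean density times the increment of the flow, so
-- dividing the difference of two fixed-point equations by `y - x` gives a dressing equation.
lemma isDressing_slope (hA : FlowAssumptions μ T m S u κ) (hX : IsFlow μ T m u X) {x y : ℝ}
    (hxy : x ≠ y) :
    IsDressing μ (fun p q => T p q * meanDensity m u X x y q) 1
      fun p => slope (fun z => X z p) x y where
  measurable := by
    simp only [slope_def_field]
    exact ((hX.measurable y).sub (hX.measurable x)).div_const _
  bounded := by
    obtain ⟨B, hB⟩ := hX.bounded x
    obtain ⟨B', hB'⟩ := hX.bounded y
    refine ⟨(B' + B) / |y - x|, fun q => ?_⟩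
    rw [slope_def_field, abs_div]
    exact div_le_div_of_nonneg_right ((abs_sub _ _).trans (add_le_add (hB' q) (hB q)))
      (abs_nonneg _)
  eq p := by
    have hmean : ∀ q, meanDensity m u X x y q * (X y q - X x q) =
        cumulativeDensity m (X y q - u q) q - cumulativeDensity m (X x q - u q) q := fun q => by
      have hslope := sub_smul_slope (fun a => cumulativeDensity m a q) (X x q - u q) (X y q - u q)
      rwa [sub_sub_sub_cancel_right, smul_eq_mul, mul_comm] at hslope
    have hincr : X y p - X x p =
        (y - x) + ∫ q, T p q * (meanDensity m u X x y q * (X y q - X x q)) ∂μ := by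
      simp only [hmean, mul_sub]
      rw [integral_sub (hX.integrable_mul_cumulativeDensity hA y p)
        (hX.integrable_mul_cumulativeDensity hA x p), hX.eq y p, hX.eq x p]
      ring
    simp only [slope_def_field, Pi.one_apply]
    rw [hincr, add_div, div_self (sub_ne_zero.2 hxy.symm), ← integral_div]
    simp only [mul_assoc, mul_div_assoc]

lemma abs_slope_le (hA : FlowAssumptions μ T m S u κ) (hX : IsFlow μ T m u X) (hκ : κ < 1)
    (p : P) (x y : ℝ) (hxy : x ≠ y) : |slope (fun z => X z p) x y| ≤ 1 / (1 - κ) :=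
  (hX.isDressing_slope hA hxy).abs_le
    (hA.kernelBound_mul (hX.measurable_meanDensity hA x y) (hA.meanDensity_mem_Icc x y)) hκ
    (fun _ => by simp) p

lemma le_slope (hA : FlowAssumptions μ T m S u κ) (hX : IsFlow μ T m u X)
    (hR : IsDressingLowerBound T κ R) (p : P) (x y : ℝ) (hxy : x ≠ y) :
    R ≤ slope (fun z => X z p) x y :=
  (hX.isDressing_slope hA hxy).lowerBound_le
    (hA.kernelBound_mul (hX.measurable_meanDensity hA x y) (hA.meanDensity_mem_Icc x y))
    (hR.mul_weight fun q => (hA.meanDensity_mem_Icc x y q).1) p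

lemma lipschitzWith (hA : FlowAssumptions μ T m S u κ) (hX : IsFlow μ T m u X) (hκ : κ < 1)
    (p : P) : LipschitzWith (1 / (1 - κ)).toNNReal fun x => X x p :=
  lipschitzWith_of_abs_slope_le (hX.abs_slope_le hA hκ p)

lemma measurable_uncurry (hA : FlowAssumptions μ T m S u κ) (hX : IsFlow μ T m u X) (hκ : κ < 1) :
    Measurable (Function.uncurry X) :=
  measurable_uncurry_of_continuous_of_measurable (fun p => (hX.lipschitzWith hA hκ p).continuous)
    hX.measurable

lemma measurableSet_tendsto_meanDensity (hA : FlowAssumptions μ T m S u κ) (hX : IsFlow μ T m u X)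
    (hκ : κ < 1) (δ : ℕ → ℝ) :
    MeasurableSet {z : ℝ × P | Tendsto (fun k => meanDensity m u X z.1 (z.1 + δ k) z.2) atTop
      (𝓝 (m (X z.1 z.2 - u z.2) z.2))} := by
  have hXz (c : ℝ) : Measurable fun z : ℝ × P => X (z.1 + c) z.2 :=
    (hX.measurable_uncurry hA hκ).comp ((measurable_fst.add_const c).prodMk measurable_snd)
  have hX₀ : Measurable fun z : ℝ × P => X z.1 z.2 := hX.measurable_uncurry hA hκ
  have hu : Measurable fun z : ℝ × P => u z.2 := hA.measurable_shift.comp measurable_snd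
  have hN := hA.measurable_uncurry_cumulativeDensity
  refine measurableSet_tendsto_fun (fun k => ?_)
    (hA.measurable_density.comp ((hX₀.sub hu).prodMk measurable_snd))
  simp only [meanDensity, slope_def_field, sub_sub_sub_cancel_right]
  exact ((hN.comp (((hXz (δ k)).sub hu).prodMk measurable_snd)).sub
    (hN.comp ((hX₀.sub hu).prodMk measurable_snd))).div ((hXz (δ k)).sub hX₀)

lemma ae_tendsto_meanDensity (hA : FlowAssumptions μ T m S u κ) (hX : IsFlow μ T m u X)
    (hR : IsDressingLowerBound T κ R) {δ : ℕ → ℝ} (hδ : Tendsto δ atTop (𝓝[≠] 0)) (q : P) :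
    ∀ᵐ x, Tendsto (fun k => meanDensity m u X x (x + δ k) q) atTop
      (𝓝 (m (X x q - u q) q)) := by
  have hle : ∀ x y, x ≠ y → R ≤ slope (fun z => X z q - u q) x y := fun x y hxy => by
    simpa only [slope_def_field, sub_sub_sub_cancel_right] using hX.le_slope hA hR q x y hxy
  have hcont : Continuous fun x => X x q - u q :=
    (hX.lipschitzWith hA hR.lt_one q).continuous.sub continuous_const
  filter_upwards [ae_comp_of_antilipschitzWith (antilipschitzWith_of_le_slope hR.pos hle)
    (LocallyIntegrable.ae_hasDerivAt_integral (hA.locallyIntegrable_density q))] with x hx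
  have hne : Tendsto (fun x => X x q - u q) (𝓝[≠] x) (𝓝[≠] (X x q - u q)) :=
    hcont.continuousWithinAt.tendsto_nhdsWithin fun y hy =>
      (strictMono_of_le_slope hR.pos hle).injective.ne hy
  exact (hasDerivAt_iff_tendsto_slope.1 (hx 0)).comp (hne.comp (tendsto_add_nhdsNE hδ x))

variable [SFinite μ]

lemma ae_tendsto_slope (hA : FlowAssumptions μ T m S u κ) (hX : IsFlow μ T m u X)
    (hR : IsDressingLowerBound T κ R)
    (hf : ∀ x, IsDressing μ (fun p q => T p q * m (X x q - u q) q) 1 (f x))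
    {δ : ℕ → ℝ} (hδ : Tendsto δ atTop (𝓝[≠] 0)) (hδ₀ : ∀ k, δ k ≠ 0) :
    ∀ᵐ x, ∀ p, Tendsto (fun k => slope (fun z => X z p) x (x + δ k)) atTop (𝓝 (f x p)) := by
  have hmean : ∀ᵐ x, ∀ᵐ q ∂μ, Tendsto (fun k => meanDensity m u X x (x + δ k) q) atTop
      (𝓝 (m (X x q - u q) q)) :=
    (Measure.ae_ae_comm (hX.measurableSet_tendsto_meanDensity hA hR.lt_one δ)).2
      (.of_forall fun q => hX.ae_tendsto_meanDensity hA hR hδ q)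
  filter_upwards [hmean] with x hx p
  have hne : ∀ k, x ≠ x + δ k := fun k => by simpa only [ne_eq, left_eq_add] using hδ₀ k
  refine IsDressing.tendsto hA.kernelBound hR.lt_one
    (fun k => hA.aestronglyMeasurable_mul (hX.measurable_meanDensity hA x (x + δ k)))
    (fun k => hA.abs_mul_le (hA.meanDensity_mem_Icc x (x + δ k)))
    (hA.kernelBound_mul (hX.measurable_density hA x)
      fun q => ⟨hA.density_nonneg _ q, hA.density_le _ q⟩)
    (fun p => ?_) (fun k => hX.isDressing_slope hA (hne k))
    (fun k q => hX.abs_slope_le hA hR.lt_one q _ _ (hne k)) (hf x) p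
  filter_upwards [hx] with q hq using hq.const_mul (T p q)

lemma integral_eq_sub (hA : FlowAssumptions μ T m S u κ) (hX : IsFlow μ T m u X)
    (hR : IsDressingLowerBound T κ R)
    (hf : ∀ x, IsDressing μ (fun p q => T p q * m (X x q - u q) q) 1 (f x)) (p : P) (a b : ℝ) :
    ∫ x in a..b, f x p = X b p - X a p := by
  have hδ₀ : ∀ k : ℕ, (1 : ℝ) / (k + 1) ≠ 0 := fun k => by positivity
  have hδ : Tendsto (fun k : ℕ => (1 : ℝ) / (k + 1)) atTop (𝓝[≠] 0) :=
    tendsto_nhdsWithin_iff.2 ⟨tendsto_one_div_add_atTop_nhds_zero_nat, .of_forall hδ₀⟩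
  refine integral_eq_sub_of_tendsto_slope (hX.lipschitzWith hA hR.lt_one p) hδ ?_ a b
  filter_upwards [hX.ae_tendsto_slope hA hR hf hδ hδ₀] with x hx using hx p

end IsFlow

end Flow

section Density

variable {P : Type*} [MeasurableSpace P] {μ : Measure P} {T : P → P → ℝ} {n₀ X0 : ℝ → P → ℝ}
  {v : P → ℝ} {κ C Cv : ℝ}

lemma flowAssumptions_of_density (hT : ∀ p, Integrable (T p) μ)
    (hn_meas : Measurable (Function.uncurry n₀)) (hn_nonneg : ∀ x p, 0 ≤ n₀ x p)
    (hn_bdd : ∀ x p, n₀ x p ≤ C) (hsup_meas : Measurable fun q => ⨆ x, n₀ x q)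
    (hκ : ∀ p, ∫ q, |T p q| * ⨆ x, n₀ x q ∂μ ≤ κ) (hv_meas : Measurable v)
    (hCv : ∀ x p, |v p| * n₀ x p ≤ Cv) (hX0_meas : Measurable (Function.uncurry X0)) (t : ℝ) :
    FlowAssumptions μ T (fun y q => n₀ (X0 y q) q) (fun q => ⨆ x, n₀ x q) (fun q => v q * t) κ where
  integrable_kernel := hT
  kernelBound :=
    { integrable p := (hT p).mul_bdd (c := C) hsup_meas.aestronglyMeasurable <|
        .of_forall fun q => by
          rw [Real.norm_of_nonneg (Real.iSup_nonneg fun x => hn_nonneg x q)]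
          exact ciSup_le fun x => hn_bdd x q
      integral_abs_le p := by
        simpa only [abs_mul, abs_of_nonneg (Real.iSup_nonneg fun x => hn_nonneg x _)] using hκ p }
  measurable_density := hn_meas.comp (hX0_meas.prodMk measurable_snd)
  density_nonneg _ q := hn_nonneg _ q
  density_le y q := le_ciSup (f := fun x => n₀ x q) ⟨C, forall_mem_range.2 (hn_bdd · q)⟩ (X0 y q)
  weight_bounded := ⟨C, fun q => ciSup_le fun x => hn_bdd x q⟩
  measurable_shift := hv_meas.mul_const t
  shift_bounded := ⟨|t| * Cv, fun q => by
    rw [abs_mul, mul_comm |v q|, mul_assoc, Real.mul_iSup_of_nonneg (abs_nonneg (v q))]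
    exact mul_le_mul_of_nonneg_left (ciSup_le fun x => hCv x q) (abs_nonneg t)⟩

theorem stmt_14_general [SFinite μ] {N0 : ℝ → P → ℝ} {Xhat onedr : ℝ → ℝ → P → ℝ} {R : ℝ}
    (hT_int : ∀ p, Integrable (T p) μ)
    (hn_meas : Measurable (Function.uncurry n₀))
    (hn_nonneg : ∀ x p, 0 ≤ n₀ x p)
    (hn_bdd : ∃ C, ∀ x p, n₀ x p ≤ C)
    (hsup_meas : Measurable fun q => ⨆ x, n₀ x q)
    (hκ : ∀ p, ∫ q, |T p q| * ⨆ x, n₀ x q ∂μ ≤ κ)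
    (hR : IsDressingLowerBound T κ R)
    (hv_meas : Measurable v)
    (hCv : ∀ x p, |v p| * n₀ x p ≤ Cv)
    (hX0_meas : Measurable (Function.uncurry X0))
    (hN0 : ∀ a p, N0 a p = ∫ y in (0 : ℝ)..a, n₀ (X0 y p) p)
    (hXhat_eq : ∀ t x p, Xhat t x p = x + ∫ q, T p q * N0 (Xhat t x q - v q * t) q ∂μ)
    (hXhat_meas : ∀ t x, Measurable (Xhat t x))
    (hXhat_bdd : ∀ t x, ∃ B, ∀ p, |Xhat t x p| ≤ B)
    (h1_meas : ∀ t x, Measurable (onedr t x))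
    (h1_bdd : ∀ t x, ∃ B, ∀ p, |onedr t x p| ≤ B)
    (h1_eq : ∀ t x p, onedr t x p
      = 1 + ∫ q, T p q * (n₀ (X0 (Xhat t x q - v q * t) q) q * onedr t x q) ∂μ) :
    (∀ t p x x', Xhat t x p - Xhat t x' p = ∫ y in x'..x, onedr t y p) ∧
    (0 < R) ∧
    (∀ t p x y, y < x → R ≤ (Xhat t x p - Xhat t y p) / (x - y)) ∧
    (∀ t p, StrictMono fun x => Xhat t x p) ∧
    (∀ t p, Function.Bijective fun x => Xhat t x p) ∧
    (∀ t p, Continuous fun x => Xhat t x p) := by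
  obtain ⟨C, hC⟩ := hn_bdd
  have hA := flowAssumptions_of_density hT_int hn_meas hn_nonneg hC hsup_meas hκ hv_meas hCv
    hX0_meas
  have hX : ∀ t, IsFlow μ T (fun y q => n₀ (X0 y q) q) (fun q => v q * t) (Xhat t) := fun t =>
    ⟨hXhat_meas t, hXhat_bdd t, fun x p => by
      simpa only [cumulativeDensity, hN0] using hXhat_eq t x p⟩
  have hdr : ∀ t x, IsDressing μ (fun p q => T p q * n₀ (X0 (Xhat t x q - v q * t) q) q) 1
      (onedr t x) := fun t x =>
    ⟨h1_meas t x, h1_bdd t x, fun p => by simpa only [mul_assoc, Pi.one_apply] using h1_eq t x p⟩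
  have hslope : ∀ t p x y, x ≠ y → R ≤ slope (fun z => Xhat t z p) x y := fun t =>
    (hX t).le_slope (hA t) hR
  have hmono : ∀ t p, StrictMono fun x => Xhat t x p := fun t p =>
    strictMono_of_le_slope hR.pos (hslope t p)
  have hcont : ∀ t p, Continuous fun x => Xhat t x p := fun t p =>
    ((hX t).lipschitzWith (hA t) hR.lt_one p).continuous
  refine ⟨fun t p x x' => ((hX t).integral_eq_sub (hA t) hR (hdr t) p x' x).symm, hR.pos,
    fun t p x y hyx => ?_, hmono, fun t p => ⟨(hmono t p).injective, ?_⟩, hcont⟩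
  · simpa only [slope_def_field] using hslope t p y x hyx.ne
  · exact surjective_of_le_slope hR.pos (hslope t p) (hcont t p)

end Density

/-- Let `X̂` solve the fixed-point problem and let
`n(t,x,p) = n₀(X₀(X̂(t,x,p) - v(p)t, p), p)`. Then the extended space-derivative of `X̂`
equals the dressing `1^dr(t,x,·)` of the constant `1` with respect to `n(t,x,·)`
(expressed as the integral identity `X̂(t,x,p) - X̂(t,x',p) = ∫_{x'}^x 1^dr(t,y,p) dy`);
consequently for all `t`, `x > y`, `p`: `(X̂(t,x,p) - X̂(t,y,p))/(x-y) ≥ R(κ₀) > 0`, so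
`X̂(t,·,p)` is strictly increasing and a homeomorphism of ℝ. -/
theorem stmt_14
    (T : ℝ → ℝ → ℝ) (n₀ : ℝ → ℝ → ℝ) (v : ℝ → ℝ) (N0 X0 : ℝ → ℝ → ℝ)
    (Xhat onedr : ℝ → ℝ → ℝ → ℝ) (κ₀ Rκ Cv : ℝ)
    (hT_meas : Measurable (Function.uncurry T))
    (hT_int : ∀ p, Integrable (fun q => T p q))
    (hT_op : ∃ M, ∀ p, (∫ q, |T p q|) ≤ M)
    (hn_meas : Measurable (Function.uncurry n₀))
    (hn_nonneg : ∀ x p, 0 ≤ n₀ x p)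
    (hn_bdd : ∃ C, ∀ x p, n₀ x p ≤ C)
    (hsup_meas : Measurable (fun q => ⨆ x, n₀ x q))
    (hκ₀ : ∀ p, (∫ q, |T p q| * ⨆ x, n₀ x q) ≤ κ₀)
    (hR : (((∀ p q, 0 ≤ T p q) ∨ (∀ p q, T p q ≤ 0)) ∧ κ₀ < 1 ∧ Rκ = 1 - κ₀) ∨
          (κ₀ < 1 / 2 ∧ Rκ = (1 - 2 * κ₀) / (1 - κ₀)))
    (hv_meas : Measurable v)
    (hCv : ∀ x p, |v p| * n₀ x p ≤ Cv)
    (hX0_meas : Measurable (Function.uncurry X0))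
    (hN0 : ∀ xh p, N0 xh p = ∫ yh in (0:ℝ)..xh, n₀ (X0 yh p) p)
    (hXhat_eq : ∀ t x p, Xhat t x p = x + ∫ q, T p q * N0 (Xhat t x q - v q * t) q)
    (hXhat_meas : ∀ t x, Measurable fun p => Xhat t x p)
    (hXhat_bdd : ∀ t x, ∃ C, ∀ p, |Xhat t x p| ≤ C)
    (h1_meas : ∀ t x, Measurable fun p => onedr t x p)
    (h1_bdd : ∃ C, ∀ t x p, |onedr t x p| ≤ C)
    (h1_eq : ∀ t x p, onedr t x p
      = 1 + ∫ q, T p q * (n₀ (X0 (Xhat t x q - v q * t) q) q * onedr t x q)) :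
    -- the extended x-derivative of X̂ is 1^dr:
    (∀ t p x x', Xhat t x p - Xhat t x' p = ∫ y in x'..x, onedr t y p) ∧
    (0 < Rκ) ∧
    (∀ t p x y, y < x → Rκ ≤ (Xhat t x p - Xhat t y p) / (x - y)) ∧
    (∀ t p, StrictMono fun x => Xhat t x p) ∧
    (∀ t p, Function.Bijective fun x => Xhat t x p) ∧
    (∀ t p, Continuous fun x => Xhat t x p) :=
  stmt_14_general hT_int hn_meas hn_nonneg hn_bdd hsup_meas hκ₀ hR hv_meas hCv hX0_meas hN0 hXhat_eq
    hXhat_meas hXhat_bdd h1_meas (fun t x => h1_bdd.imp fun _ h => h t x) h1_eq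
end

section
/- Uniqueness of the initial coordinate change: suppose f(x,p) is, for each p, absolutely continuous in x with f(0,p) = 0, x ↦ f(x,·) ∈ B(ℝ) well-defined, and satisfies ∂̌f(x,p)/∂̌x = 1^dr[f](x,p) for all x,p, where 1^dr[f](x,·) is the dressing of 1 with respect to the occupation function ñ_f(x,p) = n₀(X₀(f(x,p),p),p). Then f is unique; in particular f(x,p) = X̂₀(x,p) = ∫₀ˣ 1^dr₀(y,p) dy, and the fixed-point solution at time zero satisfies X̂(0,x,p) = X̂₀(x,p) and n(0,x,p) = n₀(x,p) for all x,p. -/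
open MeasureTheory

/-!
A solution `f` of the initial-value problem is turned into a solution of the fixed-point equation
`f(x, p) = x + ∫ T(p, q) N̂₀(f(x, q), q) dq`: integrate the dressing equation in `x`, exchange the
two integrals and substitute `w = f(y, q)` in `∫₀ˣ n̂₀(f(y, q), q) ∂f(y, q) dy`. The fixed point is
unique because `N̂₀(·, q)` is Lipschitz with constant `sup n₀(·, q)`, which makes the right-hand
side a `κ₀`-contraction in the supremum norm.

Two points are delicate. The substitution is for an integrand that is merely bounded and measurable
and an `f` that need not be monotone; it rests on `f' = 0` almost everywhere on the preimage of a
null set. Fubini needs the dressed function to be jointly measurable, which it is as the pointwise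
limit of its Neumann iterates.
-/

open Set Filter Topology
open scoped NNReal

theorem measure_eq_zero_of_measure_image_eq_zero {E : Type*} [NormedAddCommGroup E]
    [NormedSpace ℝ E] [FiniteDimensional ℝ E] [MeasurableSpace E] [BorelSpace E] {μ : Measure E}
    [μ.IsAddHaarMeasure] {f : E → E} {f' : E → E →L[ℝ] E} {s : Set E}
    (hf : ∀ x ∈ s, HasFDerivWithinAt f (f' x) s x) (hdet : ∀ x ∈ s, (f' x).det ≠ 0)
    (hs : μ (f '' s) = 0) : μ s = 0 := by
  have hlinear (A : E →L[ℝ] E) : ∃ r : ℝ≥0, r ≠ 0 ∧ (A.det ≠ 0 →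
      ∀ u, ApproximatesLinearOn f A u r → μ (f '' u) = 0 → μ u = 0) := by
    by_cases hA : A.det = 0
    · exact ⟨1, one_ne_zero, fun h => absurd hA h⟩
    obtain ⟨m, hm_pos, hm⟩ := ENNReal.lt_iff_exists_nnreal_btwn.1
      (ENNReal.ofReal_pos.2 (abs_pos.2 hA))
    obtain ⟨r, hr, hr_pos⟩ :=
      ((mul_le_addHaar_image_of_lt_det μ A hm).and self_mem_nhdsWithin).exists
    refine ⟨r, ne_of_gt hr_pos, fun _ u hu hfu => ?_⟩
    have hmul : m * μ u = 0 := le_antisymm ((hr u f hu).trans hfu.le) zero_le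
    exact (mul_eq_zero.1 hmul).resolve_left hm_pos.ne'
  choose r hr_ne hr using hlinear
  obtain ⟨t, A, -, -, hst, happrox, hA⟩ :=
    exists_partition_approximatesLinearOn_of_hasFDerivWithinAt f s f' hf r hr_ne
  rcases s.eq_empty_or_nonempty with rfl | hne
  · exact measure_empty
  have hpiece (n : ℕ) : μ (s ∩ t n) = 0 := by
    obtain ⟨y, hy, hAy⟩ := hA hne n
    exact hr (A n) (hAy ▸ hdet y hy) _ (happrox n)
      (measure_mono_null (image_mono inter_subset_left) hs)
  rw [← inter_eq_self_of_subset_left hst, inter_iUnion]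
  exact measure_iUnion_null hpiece

theorem ae_deriv_eq_zero_of_mem_null {f : ℝ → ℝ} {N : Set ℝ} (hN : volume N = 0) :
    ∀ᵐ y, f y ∈ N → deriv f y = 0 := by
  have hnull : volume {y | f y ∈ N ∧ deriv f y ≠ 0} = 0 := by
    refine measure_eq_zero_of_measure_image_eq_zero (f := f)
      (f' := fun y => ContinuousLinearMap.toSpanSingleton ℝ (deriv f y))
      (fun y hy =>
        (differentiableAt_of_deriv_ne_zero hy.2).hasDerivAt.hasFDerivAt.hasFDerivWithinAt)
      (fun y hy => by simpa [ContinuousLinearMap.det] using hy.2) (measure_mono_null ?_ hN)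
    rintro _ ⟨y, hy, rfl⟩
    exact hy.1
  filter_upwards [compl_mem_ae_iff.2 hnull] with y hy hyN
  by_contra hderiv
  exact hy ⟨hyN, hderiv⟩

theorem absolutelyContinuousOnInterval_comp_of_lipschitzWith {X Y : Type*}
    [PseudoMetricSpace X] [PseudoMetricSpace Y] {Φ : X → Y} {f : ℝ → X} {K : ℝ≥0} {a b : ℝ}
    (hΦ : LipschitzWith K Φ) (hf : AbsolutelyContinuousOnInterval f a b) :
    AbsolutelyContinuousOnInterval (Φ ∘ f) a b := by
  have hbound := Tendsto.const_mul (K : ℝ) hf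
  rw [mul_zero] at hbound
  refine squeeze_zero (fun _ => Finset.sum_nonneg fun _ _ => dist_nonneg) (fun E => ?_) hbound
  rw [Finset.mul_sum]
  exact Finset.sum_le_sum fun i _ => hΦ.dist_le_mul _ _

theorem hasDerivAt_zero_comp_of_lipschitzWith {Φ f : ℝ → ℝ} {K : ℝ≥0} {y : ℝ}
    (hΦ : LipschitzWith K Φ) (hf : HasDerivAt f 0 y) : HasDerivAt (Φ ∘ f) 0 y := by
  rw [hasDerivAt_iff_isLittleO] at hf ⊢
  simp only [smul_zero, sub_zero] at hf ⊢
  refine Asymptotics.IsBigO.trans_isLittleO (.of_bound K (.of_forall fun z => ?_)) hf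
  exact hΦ.dist_le_mul (f z) (f y)

theorem intervalIntegrable_of_norm_le {E : Type*} [NormedAddCommGroup E] {h : ℝ → E} {D : ℝ}
    (hh : AEStronglyMeasurable h volume) (hD : ∀ y, ‖h y‖ ≤ D) (a b : ℝ) :
    IntervalIntegrable h volume a b :=
  (intervalIntegrable_const (c := D)).mono_fun' hh.restrict (ae_of_all _ hD)

theorem norm_intervalIntegral_sub_le_of_norm_le {E : Type*} [NormedAddCommGroup E]
    [NormedSpace ℝ E] {h : ℝ → E} {D : ℝ} (hh : AEStronglyMeasurable h volume)
    (hD : ∀ y, ‖h y‖ ≤ D) (c a b : ℝ) :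
    ‖(∫ y in c..a, h y) - ∫ y in c..b, h y‖ ≤ D * |a - b| := by
  have hint := intervalIntegrable_of_norm_le hh hD
  rw [intervalIntegral.integral_interval_sub_left (hint c a) (hint c b)]
  exact intervalIntegral.norm_integral_le_of_norm_le_const fun y _ => hD y

theorem intervalIntegral_comp_mul_deriv_of_absolutelyContinuous {f g h : ℝ → ℝ} {a b D : ℝ}
    (hf : AbsolutelyContinuousOnInterval f a b) (hfg : ∀ᵐ y, y ∈ uIcc a b → HasDerivAt f (g y) y)
    (hh : AEStronglyMeasurable h volume) (hD : ∀ y, |h y| ≤ D) :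
    ∫ y in a..b, h (f y) * g y = ∫ w in f a..f b, h w := by
  set Φ : ℝ → ℝ := fun z => ∫ w in f a..z, h w
  have hΦ_lip : LipschitzWith D.toNNReal Φ := LipschitzWith.of_dist_le' fun z w =>
    norm_intervalIntegral_sub_le_of_norm_le hh hD (f a) z w
  have hh_loc : LocallyIntegrable h volume :=
    (memLp_top_of_bound hh D (ae_of_all _ hD)).locallyIntegrable le_top
  have hΦ_deriv : ∀ᵐ w, HasDerivAt Φ (h w) w := by
    filter_upwards [LocallyIntegrable.ae_hasDerivAt_integral hh_loc] with w hw using hw (f a)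
  have hchain : ∀ᵐ y, y ∈ uIcc a b → HasDerivAt (Φ ∘ f) (h (f y) * g y) y := by
    filter_upwards [hfg, ae_deriv_eq_zero_of_mem_null (f := f) (ae_iff.1 hΦ_deriv)]
      with y hfy hnull hy
    by_cases hΦy : HasDerivAt Φ (h (f y)) (f y)
    · exact hΦy.comp y (hfy hy)
    · have hg : g y = 0 := (hfy hy).deriv ▸ hnull hΦy
      rw [hg, mul_zero]
      exact hasDerivAt_zero_comp_of_lipschitzWith hΦ_lip (hg ▸ hfy hy)
  calc ∫ y in a..b, h (f y) * g y = ∫ y in a..b, deriv (Φ ∘ f) y :=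
        intervalIntegral.integral_congr_ae <| hchain.mono fun y hy hyab =>
          (hy (uIoc_subset_uIcc hyab)).deriv.symm
    _ = Φ (f b) - Φ (f a) :=
        (absolutelyContinuousOnInterval_comp_of_lipschitzWith hΦ_lip hf).integral_deriv_eq_sub
    _ = ∫ w in f a..f b, h w := by simp [Φ]

theorem eq_zero_of_forall_abs_le_mul {ι : Type*} {d : ι → ℝ} {κ : ℝ} (hκ : κ < 1)
    (hd : ∃ C, ∀ i, |d i| ≤ C) (hcontr : ∀ C, (∀ i, |d i| ≤ C) → ∀ i, |d i| ≤ κ * C) (i : ι) :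
    d i = 0 := by
  obtain ⟨C, hC⟩ := hd
  have : Nonempty ι := ⟨i⟩
  set S := ⨆ j, |d j|
  have hle (j : ι) : |d j| ≤ S := le_ciSup ⟨C, forall_mem_range.2 hC⟩ j
  have hS : S ≤ κ * S := ciSup_le (hcontr S hle)
  exact abs_nonpos_iff.1 ((hle i).trans (by nlinarith))

variable {α β : Type*}

/-- `primitive m x p = ∫₀ˣ m(y, p) dy`. It gives `N̂₀` when `m` is the occupation function in the
coordinate `x̂`, and `X̂₀` when `m` is `1^dr₀`. -/
noncomputable def primitive (m : ℝ → α → ℝ) (x : ℝ) (p : α) : ℝ :=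
  ∫ y in (0 : ℝ)..x, m y p

namespace primitive

variable {m : ℝ → α → ℝ}

theorem zero (m : ℝ → α → ℝ) (p : α) : primitive m 0 p = 0 :=
  intervalIntegral.integral_same

theorem abs_sub_le {p : α} {D : ℝ} (hm : Measurable fun y => m y p) (hD : ∀ y, |m y p| ≤ D)
    (x y : ℝ) : |primitive m x p - primitive m y p| ≤ D * |x - y| :=
  norm_intervalIntegral_sub_le_of_norm_le hm.aestronglyMeasurable hD 0 x y

theorem abs_le {p : α} {D : ℝ} (hm : Measurable fun y => m y p) (hD : ∀ y, |m y p| ≤ D)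
    (x : ℝ) : |primitive m x p| ≤ D * |x| := by
  simpa only [zero, sub_zero] using abs_sub_le hm hD x 0

theorem continuous {p : α} {D : ℝ} (hm : Measurable fun y => m y p) (hD : ∀ y, |m y p| ≤ D) :
    Continuous fun x => primitive m x p :=
  intervalIntegral.continuous_primitive
    (intervalIntegrable_of_norm_le hm.aestronglyMeasurable hD) 0

theorem integral_comp_mul {g : ℝ → α → ℝ} {p : α} {x D : ℝ} (hm : Measurable fun y => m y p)
    (hD : ∀ y, |m y p| ≤ D) (hg : IntervalIntegrable (fun y => g y p) volume 0 x) :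
    ∫ y in (0 : ℝ)..x, m (primitive g y p) p * g y p = primitive m (primitive g x p) p := by
  have hchange := intervalIntegral_comp_mul_deriv_of_absolutelyContinuous
    (hg.absolutelyContinuousOnInterval_intervalIntegral left_mem_uIcc)
    (hg.ae_hasDerivAt_integral.mono fun y hy hyx => hy hyx 0 left_mem_uIcc)
    hm.aestronglyMeasurable hD
  rwa [intervalIntegral.integral_same] at hchange

variable [MeasurableSpace α]

theorem measurable (hm : Measurable (Function.uncurry m)) (x : ℝ) : Measurable (primitive m x) := by
  have hswap : StronglyMeasurable (Function.uncurry fun p y => m y p) :=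
    (hm.comp measurable_swap).stronglyMeasurable
  exact hswap.integral_prod_right.measurable.sub hswap.integral_prod_right.measurable

theorem measurable_uncurry {W : α → ℝ} (hm : Measurable (Function.uncurry m))
    (hW : ∀ y p, |m y p| ≤ W p) :
    Measurable (Function.uncurry (primitive m)) :=
  measurable_uncurry_of_continuous_of_measurable
    (fun p => continuous hm.of_uncurry_right fun y => hW y p) (measurable hm)

end primitive

variable [MeasurableSpace α] [MeasurableSpace β] {μ : Measure α}

/-- The kernel `T`, weighted by a bound `W` for the occupation function, has `L¹` row norms at most
`κ < 1`. This is what makes the dressing equation and the fixed-point equation contractive.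
Integrability is a separate field because `∫` is `0` on non-integrable functions. -/
structure IsContractingKernel (μ : Measure α) (T : α → α → ℝ) (W : α → ℝ) (κ : ℝ) : Prop where
  measurable : Measurable (Function.uncurry T)
  integrable : ∀ p, Integrable (fun q => |T p q| * W q) μ
  integral_le : ∀ p, ∫ q, |T p q| * W q ∂μ ≤ κ
  lt_one : κ < 1

/-- `φ` is a bounded measurable solution of `φ(p) = x + ∫ T(p, q) N(φ(q), q) dq`. -/
structure IsShiftFixedPoint (μ : Measure α) (T : α → α → ℝ) (N : ℝ → α → ℝ) (x : ℝ)
    (φ : α → ℝ) : Prop where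
  measurable : Measurable φ
  bounded : ∃ C, ∀ p, |φ p| ≤ C
  eq : ∀ p, φ p = x + ∫ q, T p q * N (φ q) q ∂μ

/-- Picard iterates, started at `0`, of the dressing equation `g = 1 + ∫ T n g` of the constant
function `1`. The occupation function `n` depends on a parameter in `β`. -/
noncomputable def neumannIterate (μ : Measure α) (T : α → α → ℝ) (n : β → α → ℝ) : ℕ → β → α → ℝ
  | 0 => fun _ _ => 0
  | k + 1 => fun y p => 1 + ∫ q, T p q * (n y q * neumannIterate μ T n k y q) ∂μ

theorem abs_mul_le_of_abs_le_mul {t u w C : ℝ} (hu : |u| ≤ w * C) : |t * u| ≤ |t| * w * C := by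
  rw [abs_mul, mul_assoc]
  exact mul_le_mul_of_nonneg_left hu (abs_nonneg t)

namespace IsContractingKernel

variable {T : α → α → ℝ} {W u : α → ℝ} {κ C : ℝ}

theorem nonneg (hT : IsContractingKernel μ T W κ) (hW : ∀ q, 0 ≤ W q) (p : α) : 0 ≤ κ :=
  (integral_nonneg fun q => mul_nonneg (abs_nonneg _) (hW q)).trans (hT.integral_le p)

theorem integrable_mul (hT : IsContractingKernel μ T W κ) (hu : Measurable u)
    (huW : ∀ q, |u q| ≤ W q * C) (p : α) : Integrable (fun q => T p q * u q) μ := by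
  have hTu : Measurable fun q => T p q * u q := hT.measurable.of_uncurry_left.mul hu
  exact ((hT.integrable p).mul_const C).mono' hTu.aestronglyMeasurable
    (ae_of_all _ fun q => abs_mul_le_of_abs_le_mul (huW q))

theorem abs_integral_mul_le (hT : IsContractingKernel μ T W κ) (hC : 0 ≤ C)
    (huW : ∀ q, |u q| ≤ W q * C) (p : α) : |∫ q, T p q * u q ∂μ| ≤ κ * C := by
  have hle (q : α) : ‖T p q * u q‖ ≤ |T p q| * W q * C := abs_mul_le_of_abs_le_mul (huW q)
  calc |∫ q, T p q * u q ∂μ| ≤ ∫ q, |T p q| * W q * C ∂μ :=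
        norm_integral_le_of_norm_le ((hT.integrable p).mul_const C) (ae_of_all _ hle)
    _ = (∫ q, |T p q| * W q ∂μ) * C := integral_mul_const _ _
    _ ≤ κ * C := mul_le_mul_of_nonneg_right (hT.integral_le p) hC

theorem eq_of_isShiftFixedPoint (hT : IsContractingKernel μ T W κ) {N : ℝ → α → ℝ}
    (hN_meas : Measurable (Function.uncurry N)) (hN_zero : ∀ q, N 0 q = 0)
    (hN_lip : ∀ a b q, |N a q - N b q| ≤ W q * |a - b|) {x : ℝ} {φ ψ : α → ℝ}
    (hφ : IsShiftFixedPoint μ T N x φ) (hψ : IsShiftFixedPoint μ T N x ψ) : φ = ψ := by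
  have hW (q : α) : 0 ≤ W q := by simpa using (abs_nonneg _).trans (hN_lip 1 0 q)
  have hint {χ : α → ℝ} (hχ : IsShiftFixedPoint μ T N x χ) (p : α) :
      Integrable (fun q => T p q * N (χ q) q) μ := by
    obtain ⟨C, hC⟩ := hχ.bounded
    refine hT.integrable_mul (C := C) (hN_meas.comp (hχ.measurable.prodMk measurable_id))
      (fun q => ?_) p
    calc |N (χ q) q| ≤ W q * |χ q| := by simpa [hN_zero] using hN_lip (χ q) 0 q
      _ ≤ W q * C := mul_le_mul_of_nonneg_left (hC q) (hW q)
  have hdiff (p : α) : φ p - ψ p = ∫ q, T p q * (N (φ q) q - N (ψ q) q) ∂μ := by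
    rw [hφ.eq, hψ.eq, add_sub_add_left_eq_sub, ← integral_sub (hint hφ p) (hint hψ p)]
    simp only [mul_sub]
  have hbdd : ∃ C, ∀ p, |φ p - ψ p| ≤ C := by
    obtain ⟨C, hC⟩ := hφ.bounded
    obtain ⟨D, hD⟩ := hψ.bounded
    exact ⟨C + D, fun p => (abs_sub _ _).trans (add_le_add (hC p) (hD p))⟩
  funext p
  refine sub_eq_zero.1 (eq_zero_of_forall_abs_le_mul hT.lt_one hbdd (fun C hC p => ?_) p)
  rw [hdiff]
  exact hT.abs_integral_mul_le ((abs_nonneg _).trans (hC p))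
    (fun q => (hN_lip _ _ q).trans (mul_le_mul_of_nonneg_left (hC q) (hW q))) p

variable [SFinite μ]

theorem measurable_neumannIterate (hT : IsContractingKernel μ T W κ) {n : β → α → ℝ}
    (hn : Measurable (Function.uncurry n)) (k : ℕ) :
    Measurable (Function.uncurry (neumannIterate μ T n k)) := by
  induction k with
  | zero => exact measurable_const
  | succ k ih =>
    have hT' : Measurable fun z : (β × α) × α => T z.1.2 z.2 :=
      hT.measurable.comp ((measurable_snd.comp measurable_fst).prodMk measurable_snd)
    have hproj : Measurable fun z : (β × α) × α => (z.1.1, z.2) :=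
      (measurable_fst.comp measurable_fst).prodMk measurable_snd
    have hintegrand : StronglyMeasurable (Function.uncurry fun (z : β × α) q =>
        T z.2 q * (n z.1 q * neumannIterate μ T n k z.1 q)) :=
      (hT'.mul ((hn.comp hproj).mul (ih.comp hproj))).stronglyMeasurable
    exact measurable_const.add hintegrand.integral_prod_right.measurable

theorem abs_sub_neumannIterate_le (hT : IsContractingKernel μ T W κ) {n : β → α → ℝ}
    (hn : Measurable (Function.uncurry n)) (hnW : ∀ y q, |n y q| ≤ W q) {g : α → ℝ} {y : β}
    (hg : Measurable g) (hgC : ∀ q, |g q| ≤ C)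
    (hg_eq : ∀ p, g p = 1 + ∫ q, T p q * (n y q * g q) ∂μ) (k : ℕ) (p : α) :
    |g p - neumannIterate μ T n k y p| ≤ C * κ ^ k := by
  have hC : 0 ≤ C := (abs_nonneg _).trans (hgC p)
  have hW (q : α) : 0 ≤ W q := (abs_nonneg _).trans (hnW y q)
  have hκ : 0 ≤ κ := hT.nonneg hW p
  have hn_mul_le {u : α → ℝ} {D : ℝ} (hu : ∀ q, |u q| ≤ D) (q : α) : |n y q * u q| ≤ W q * D := by
    rw [abs_mul]
    exact mul_le_mul (hnW y q) (hu q) (abs_nonneg _) (hW q)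
  induction k generalizing p with
  | zero => simpa [neumannIterate] using hgC p
  | succ k ih =>
    set w := neumannIterate μ T n k y
    have hny : Measurable (n y) := hn.of_uncurry_left
    have hw : Measurable w := (hT.measurable_neumannIterate hn k).of_uncurry_left
    have hw_le (q : α) : |w q| ≤ C + C * κ ^ k := by
      rw [← sub_sub_cancel (g q) (w q)]
      exact (abs_sub _ _).trans (add_le_add (hgC q) (ih q))
    have hdiff : g p - neumannIterate μ T n (k + 1) y p =
        ∫ q, T p q * (n y q * (g q - w q)) ∂μ := by
      calc g p - neumannIterate μ T n (k + 1) y p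
          = (∫ q, T p q * (n y q * g q) ∂μ) - ∫ q, T p q * (n y q * w q) ∂μ := by
            rw [hg_eq, neumannIterate, add_sub_add_left_eq_sub]
        _ = ∫ q, (T p q * (n y q * g q) - T p q * (n y q * w q)) ∂μ :=
            (integral_sub (hT.integrable_mul (hny.mul hg) (hn_mul_le hgC) p)
              (hT.integrable_mul (hny.mul hw) (hn_mul_le hw_le) p)).symm
        _ = ∫ q, T p q * (n y q * (g q - w q)) ∂μ := by simp only [mul_sub]
    rw [hdiff, pow_succ', mul_left_comm]
    exact hT.abs_integral_mul_le (mul_nonneg hC (pow_nonneg hκ k)) (hn_mul_le ih) p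

theorem measurable_uncurry_of_dressing_eq (hT : IsContractingKernel μ T W κ) {n g : β → α → ℝ}
    (hn : Measurable (Function.uncurry n)) (hnW : ∀ y q, |n y q| ≤ W q)
    (hg : ∀ y, Measurable (g y)) (hgC : ∀ y, ∃ C, ∀ q, |g y q| ≤ C)
    (hg_eq : ∀ y p, g y p = 1 + ∫ q, T p q * (n y q * g y q) ∂μ) :
    Measurable (Function.uncurry g) := by
  refine measurable_of_tendsto_metrizable (hT.measurable_neumannIterate hn)
    (tendsto_pi_nhds.2 fun ⟨y, p⟩ => ?_)
  obtain ⟨C, hC⟩ := hgC y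
  have hκ : 0 ≤ κ := hT.nonneg (fun q => (abs_nonneg _).trans (hnW y q)) p
  have hgeom : Tendsto (fun k : ℕ => C * κ ^ k) atTop (𝓝 0) := by
    simpa using (tendsto_pow_atTop_nhds_zero_of_lt_one hκ hT.lt_one).const_mul C
  refine tendsto_iff_dist_tendsto_zero.2 (squeeze_zero (fun _ => dist_nonneg) (fun k => ?_) hgeom)
  rw [dist_comm, Real.dist_eq]
  exact hT.abs_sub_neumannIterate_le hn hnW (hg y) hC (hg_eq y) k p

end IsContractingKernel

/-- The initial-value problem `∂f/∂x = 1^dr[f]`, `f(0, ·) = 0` in integrated form: `f` is the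
primitive of a bounded function `g = 1^dr[f]`, which solves the dressing equation of `1` for the
occupation function `m(f(x, p), p)`. Measurability of `g` is required in each variable
separately. -/
structure IsDressedCoordinate (μ : Measure α) (T : α → α → ℝ) (m f g : ℝ → α → ℝ) : Prop where
  measurable : ∀ x, Measurable (f x)
  measurable_dressing : ∀ x, Measurable (g x)
  measurable_dressing_left : ∀ p, Measurable fun y => g y p
  bounded_dressing : ∃ C, ∀ x p, |g x p| ≤ C
  dressing_eq : ∀ x p, g x p = 1 + ∫ q, T p q * (m (f x q) q * g x q) ∂μ
  eq_primitive : f = primitive g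

namespace IsDressedCoordinate

variable {T : α → α → ℝ} {m f f₁ f₂ g g₁ g₂ : ℝ → α → ℝ} {W : α → ℝ} {κ : ℝ}

theorem measurable_uncurry (h : IsDressedCoordinate μ T m f g) :
    Measurable (Function.uncurry f) := by
  obtain ⟨C, hC⟩ := h.bounded_dressing
  refine measurable_uncurry_of_continuous_of_measurable (fun p => ?_) h.measurable
  rw [h.eq_primitive]
  exact primitive.continuous (h.measurable_dressing_left p) fun y => hC y p

variable [SFinite μ]

theorem integrable_prod (hT : IsContractingKernel μ T W κ)
    (hm : Measurable (Function.uncurry m)) (hmW : ∀ z q, |m z q| ≤ W q)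
    (h : IsDressedCoordinate μ T m f g) (x : ℝ) (p : α) :
    Integrable (Function.uncurry fun y q => T p q * (m (f y q) q * g y q))
      ((volume.restrict (uIoc 0 x)).prod μ) := by
  obtain ⟨C, hC⟩ := h.bounded_dressing
  have hmf : Measurable (Function.uncurry fun y q => m (f y q) q) :=
    hm.comp (h.measurable_uncurry.prodMk measurable_snd)
  have hg : Measurable (Function.uncurry g) := hT.measurable_uncurry_of_dressing_eq hmf
    (fun _ _ => hmW _ _) h.measurable_dressing (fun y => ⟨C, hC y⟩) h.dressing_eq
  have hTp : Measurable fun z : ℝ × α => T p z.2 :=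
    hT.measurable.of_uncurry_left.comp measurable_snd
  have : IsFiniteMeasure (volume.restrict (uIoc 0 x)) := by rw [uIoc]; infer_instance
  have hbound : Integrable (fun z : ℝ × α => C * (|T p z.2| * W z.2))
      ((volume.restrict (uIoc 0 x)).prod μ) :=
    (integrable_const C).mul_prod (hT.integrable p)
  refine hbound.mono' (hTp.mul (hmf.mul hg)).aestronglyMeasurable (ae_of_all _ fun ⟨y, q⟩ => ?_)
  calc |T p q * (m (f y q) q * g y q)| = |T p q| * (|m (f y q) q| * |g y q|) := by
        rw [abs_mul, abs_mul]
    _ ≤ |T p q| * (W q * C) := by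
        gcongr
        exacts [(abs_nonneg _).trans (hmW 0 q), hmW _ q, hC y q]
    _ = C * (|T p q| * W q) := by ring

theorem isShiftFixedPoint (hT : IsContractingKernel μ T W κ)
    (hm : Measurable (Function.uncurry m)) (hmW : ∀ z q, |m z q| ≤ W q)
    (h : IsDressedCoordinate μ T m f g) (x : ℝ) :
    IsShiftFixedPoint μ T (primitive m) x (f x) := by
  obtain ⟨C, hC⟩ := h.bounded_dressing
  refine ⟨h.measurable x, ⟨C * |x|, fun p => ?_⟩, fun p => ?_⟩
  · rw [h.eq_primitive]
    exact primitive.abs_le (h.measurable_dressing_left p) (fun y => hC y p) x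
  have hsubst (q : α) : ∫ y in (0 : ℝ)..x, m (f y q) q * g y q = primitive m (f x q) q := by
    rw [h.eq_primitive]
    exact primitive.integral_comp_mul hm.of_uncurry_right (fun y => hmW y q)
      (intervalIntegrable_of_norm_le (h.measurable_dressing_left q).aestronglyMeasurable
        (fun y => hC y q) 0 x)
  have hint := h.integrable_prod hT hm hmW x p
  calc f x p = ∫ y in (0 : ℝ)..x, g y p := by rw [h.eq_primitive, primitive]
    _ = ∫ y in (0 : ℝ)..x, (1 + ∫ q, T p q * (m (f y q) q * g y q) ∂μ) := by
        simp only [← h.dressing_eq]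
    _ = x + ∫ y in (0 : ℝ)..x, ∫ q, T p q * (m (f y q) q * g y q) ∂μ := by
        have hinner : IntervalIntegrable (fun y => ∫ q, T p q * (m (f y q) q * g y q) ∂μ)
            volume 0 x := intervalIntegrable_iff.2 hint.integral_prod_left
        rw [intervalIntegral.integral_add intervalIntegrable_const hinner,
          intervalIntegral.integral_const, sub_zero, smul_eq_mul, mul_one]
    _ = x + ∫ q, T p q * primitive m (f x q) q ∂μ := by
        rw [intervalIntegral_integral_swap hint]
        simp only [intervalIntegral.integral_const_mul, hsubst]

theorem eq_of_isShiftFixedPoint (hT : IsContractingKernel μ T W κ)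
    (hm : Measurable (Function.uncurry m)) (hmW : ∀ z q, |m z q| ≤ W q)
    (h : IsDressedCoordinate μ T m f g) {x : ℝ} {φ : α → ℝ}
    (hφ : IsShiftFixedPoint μ T (primitive m) x φ) : φ = f x :=
  hT.eq_of_isShiftFixedPoint (primitive.measurable_uncurry hm hmW) (primitive.zero m)
    (fun a b q => primitive.abs_sub_le hm.of_uncurry_right (fun y => hmW y q) a b) hφ
    (h.isShiftFixedPoint hT hm hmW x)

theorem unique (hT : IsContractingKernel μ T W κ) (hm : Measurable (Function.uncurry m))
    (hmW : ∀ z q, |m z q| ≤ W q) (h₁ : IsDressedCoordinate μ T m f₁ g₁)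
    (h₂ : IsDressedCoordinate μ T m f₂ g₂) : f₁ = f₂ :=
  funext fun x => h₂.eq_of_isShiftFixedPoint hT hm hmW (h₁.isShiftFixedPoint hT hm hmW x)

end IsDressedCoordinate

theorem stmt_16_general [SFinite μ] {T : α → α → ℝ} {W : α → ℝ} {κ : ℝ}
    {n₀ onedr0 Xhat0 X0 N0 Xinit : ℝ → α → ℝ}
    (hT : IsContractingKernel μ T W κ)
    (hn_meas : Measurable (Function.uncurry n₀))
    (hnW : ∀ x q, |n₀ x q| ≤ W q)
    (h1_meas : Measurable (Function.uncurry onedr0))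
    (h1_bdd : ∃ C, ∀ y p, |onedr0 y p| ≤ C)
    (h1_eq : ∀ y p, onedr0 y p = 1 + ∫ q, T p q * (n₀ y q * onedr0 y q) ∂μ)
    (hXhat0 : ∀ x p, Xhat0 x p = ∫ y in (0 : ℝ)..x, onedr0 y p)
    (hX0_meas : Measurable (Function.uncurry X0))
    (hX0_inv : ∀ p, Function.LeftInverse (fun xh => X0 xh p) (fun x => Xhat0 x p))
    (hN0 : ∀ xh p, N0 xh p = ∫ yh in (0 : ℝ)..xh, n₀ (X0 yh p) p)
    (hXinit : ∀ x, IsShiftFixedPoint μ T N0 x (Xinit x)) :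
    (∀ f g, IsDressedCoordinate μ T (fun z q => n₀ (X0 z q) q) f g → ∀ x p, f x p = Xhat0 x p) ∧
    (∀ x p, Xinit x p = Xhat0 x p) ∧
    (∀ x p, n₀ (X0 (Xinit x p) p) p = n₀ x p) := by
  have hm : Measurable (Function.uncurry fun z q => n₀ (X0 z q) q) :=
    hn_meas.comp (hX0_meas.prodMk measurable_snd)
  have hmW (z : ℝ) (q : α) : |n₀ (X0 z q) q| ≤ W q := hnW _ q
  have hinv (x : ℝ) (p : α) : X0 (Xhat0 x p) p = x := hX0_inv p x
  obtain rfl : Xhat0 = primitive onedr0 := funext₂ hXhat0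
  obtain rfl : N0 = primitive fun z q => n₀ (X0 z q) q := funext₂ hN0
  have hsol : IsDressedCoordinate μ T (fun z q => n₀ (X0 z q) q) (primitive onedr0) onedr0 :=
    { measurable := primitive.measurable h1_meas
      measurable_dressing := fun _ => h1_meas.of_uncurry_left
      measurable_dressing_left := fun _ => h1_meas.of_uncurry_right
      bounded_dressing := h1_bdd
      dressing_eq := by simpa only [hinv] using h1_eq
      eq_primitive := rfl }
  have hinit (x : ℝ) : Xinit x = primitive onedr0 x :=
    hsol.eq_of_isShiftFixedPoint hT hm hmW (hXinit x)
  exact ⟨fun f g h x p => by rw [h.unique hT hm hmW hsol],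
    fun x p => by rw [hinit], fun x p => by rw [hinit, hinv]⟩

theorem abs_le_iSup_of_nonneg {ι : Type*} {u : ι → ℝ} {B : ℝ} (hu : ∀ i, 0 ≤ u i)
    (hB : ∀ i, u i ≤ B) (i : ι) : |u i| ≤ ⨆ j, u j := by
  rw [abs_of_nonneg (hu i)]
  exact le_ciSup ⟨B, forall_mem_range.2 hB⟩ i

theorem isContractingKernel_iSup {ι : Type*} [Nonempty ι] {T : α → α → ℝ} {n : ι → α → ℝ} {κ B : ℝ}
    (hT_meas : Measurable (Function.uncurry T)) (hT_int : ∀ p, Integrable (fun q => T p q) μ)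
    (hn : ∀ i q, 0 ≤ n i q) (hB : ∀ i q, n i q ≤ B) (hsup : Measurable fun q => ⨆ i, n i q)
    (hκ : ∀ p, ∫ q, |T p q| * (⨆ i, n i q) ∂μ ≤ κ) (hκ1 : κ < 1) :
    IsContractingKernel μ T (fun q => ⨆ i, n i q) κ where
  measurable := hT_meas
  integrable p := (hT_int p).abs.mul_bdd hsup.aestronglyMeasurable (ae_of_all _ fun q => by
    rw [Real.norm_of_nonneg (Real.iSup_nonneg fun i => hn i q)]
    exact ciSup_le fun i => hB i q)
  integral_le := hκ
  lt_one := hκ1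

/-- Uniqueness of the initial coordinate change. Any `f` with `f(0,p)=0`,
`f(x,·) ∈ B(ℝ)`, which is the integral of a bounded function `g` solving the dressing
equation of `1` with respect to `ñ_f(x,p) = n₀(X₀(f(x,p),p),p)` (i.e.
`∂̌f/∂̌x = 1^dr[f]`), equals `X̂₀(x,p) = ∫₀ˣ 1^dr₀(y,p) dy`; in particular the
fixed-point solution at time zero satisfies `X̂(0,x,p) = X̂₀(x,p)` and
`n(0,x,p) = n₀(x,p)`. -/
theorem stmt_16
    (T : ℝ → ℝ → ℝ) (n₀ : ℝ → ℝ → ℝ) (v : ℝ → ℝ)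
    (onedr0 Xhat0 X0 N0 : ℝ → ℝ → ℝ) (Xhat : ℝ → ℝ → ℝ → ℝ) (κ₀ Cv : ℝ)
    (hT_meas : Measurable (Function.uncurry T))
    (hT_int : ∀ p, Integrable (fun q => T p q))
    (hT_op : ∃ M, ∀ p, (∫ q, |T p q|) ≤ M)
    (hn_meas : Measurable (Function.uncurry n₀))
    (hn_nonneg : ∀ x p, 0 ≤ n₀ x p)
    (hn_bdd : ∃ C, ∀ x p, n₀ x p ≤ C)
    (hsup_meas : Measurable (fun q => ⨆ x, n₀ x q))
    (hκ₀ : ∀ p, (∫ q, |T p q| * ⨆ x, n₀ x q) ≤ κ₀)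
    (hA : (((∀ p q, 0 ≤ T p q) ∨ (∀ p q, T p q ≤ 0)) ∧ κ₀ < 1) ∨ κ₀ < 1 / 2)
    (hv_meas : Measurable v)
    (hCv : ∀ x p, |v p| * n₀ x p ≤ Cv)
    (h1_meas : Measurable (Function.uncurry onedr0))
    (h1_bdd : ∃ C, ∀ y p, |onedr0 y p| ≤ C)
    (h1_eq : ∀ y p, onedr0 y p = 1 + ∫ q, T p q * (n₀ y q * onedr0 y q))
    (hXhat0 : ∀ x p, Xhat0 x p = ∫ y in (0:ℝ)..x, onedr0 y p)
    (hX0_meas : Measurable (Function.uncurry X0))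
    (hX0inv : ∀ p, Function.LeftInverse (fun xh => X0 xh p) (fun x => Xhat0 x p) ∧
      Function.RightInverse (fun xh => X0 xh p) (fun x => Xhat0 x p))
    (hN0 : ∀ xh p, N0 xh p = ∫ yh in (0:ℝ)..xh, n₀ (X0 yh p) p)
    (hXhat_eq : ∀ t x p, Xhat t x p = x + ∫ q, T p q * N0 (Xhat t x q - v q * t) q)
    (hXhat_meas : ∀ t x, Measurable fun p => Xhat t x p)
    (hXhat_bdd : ∀ t x, ∃ C, ∀ p, |Xhat t x p| ≤ C) :
    -- uniqueness of the solution to the initial-value problem ∂̌f/∂̌x = 1^dr[f], f(0,·)=0: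
    (∀ f g : ℝ → ℝ → ℝ,
      (∀ x, ∃ C, ∀ p, |f x p| ≤ C) →
      (∀ x, Measurable fun p => f x p) →
      (∃ C, ∀ x p, |g x p| ≤ C) →
      (∀ x, Measurable fun p => g x p) →
      (∀ p, Measurable fun y => g y p) →
      (∀ x p, g x p = 1 + ∫ q, T p q * (n₀ (X0 (f x q) q) q * g x q)) →
      (∀ x p, f x p = ∫ y in (0:ℝ)..x, g y p) →
      ∀ x p, f x p = Xhat0 x p) ∧
    -- the fixed-point solution at time zero is X̂₀:
    (∀ x p, Xhat 0 x p = Xhat0 x p) ∧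
    -- and the occupation function at time zero is n₀:
    (∀ x p, n₀ (X0 (Xhat 0 x p - v p * 0) p) p = n₀ x p) := by
  obtain ⟨B, hB⟩ := hn_bdd
  have hκ1 : κ₀ < 1 := hA.elim And.right fun h => h.trans one_half_lt_one
  obtain ⟨huniq, hinit, hocc⟩ := stmt_16_general
    (isContractingKernel_iSup hT_meas hT_int hn_nonneg hB hsup_meas hκ₀ hκ1) hn_meas
    (fun x q => abs_le_iSup_of_nonneg (fun y => hn_nonneg y q) (fun y => hB y q) x)
    h1_meas h1_bdd h1_eq hXhat0 hX0_meas (fun p => (hX0inv p).1) hN0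
    (fun x => ⟨hXhat_meas 0 x, hXhat_bdd 0 x,
      by simpa only [mul_zero, sub_zero] using hXhat_eq 0 x⟩)
  exact ⟨fun f g _ hf hgC hg hg' hg_eq hfg => huniq f g ⟨hf, hg, hg', hgC, hg_eq, funext₂ hfg⟩,
    hinit, by simpa only [mul_zero, sub_zero] using hocc⟩
end

section
/- Equivalence of weak formulations of a conservation law: Let q, j ∈ B(ℝ²) be bounded measurable functions of (t,x). The following are equivalent: (i) [weak form] for every Schwartz function φ on ℝ², ∫∫ (∂_t φ · q + ∂_x φ · j) dt dx = 0; (ii) [partial integral form] for a.e. (x₁,x₂,t₁,t₂) ∈ ℝ⁴, ∫_{x₁}^{x₂}(q(t₂,x) − q(t₁,x))dx + ∫_{t₁}^{t₂}(j(t,x₂) − j(t,x₁))dt = 0; (iii) [partial potential form] there exists N : ℝ² → ℝ with N(0,0) = 0, absolutely continuous in x uniformly in t and in t uniformly in x, such that ∂N/∂x = q for a.e. t and a.e. x, and ∂N/∂t = −j for a.e. x and a.e. t. -/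
open MeasureTheory

/-!
Write `F = (q, j)`, a bounded planar field. If `F` is weakly divergence free, its mollifications
are smooth and divergence free, so by the divergence theorem their flux out of every rectangle
vanishes; dominated convergence along almost every line passes this on to `F`.

If almost every flux vanishes, fix a corner that is good for almost every opposite corner and
integrate `q dx - j dt` from it along the two monotone rectangular paths. The two results agree
almost everywhere; one is Lipschitz in `t` on every line, the other in `x`, so on almost all lines
they are restrictions of one Lipschitz function, the stream function.

Conversely, if `N` is a Lipschitz stream function, integrating `∫ (∂ₜφ ∂ₓN - ∂ₓφ ∂ₜN)` by parts
turns it into a difference of mixed second derivatives of `φ`, which vanishes. Lipschitz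
integration by parts needs compactly supported test functions, and a cutoff extends the result to
Schwartz functions.
-/

namespace ContinuityEquation

open Filter Topology Set Function
open scoped NNReal ContDiff Convolution SchwartzMap

section ProductMeasures

variable {α β γ δ : Type*} [MeasurableSpace α] [MeasurableSpace β] [MeasurableSpace γ]
  [MeasurableSpace δ] {μ : Measure α} {ν : Measure β}

theorem measurePreserving_prodProdProdComm (μ : Measure α) (ν : Measure β) (ρ : Measure γ)
    (τ : Measure δ) [SFinite μ] [SFinite ν] [SFinite ρ] [SFinite τ] :
    MeasurePreserving (Equiv.prodProdProdComm α β γ δ) ((μ.prod ν).prod (ρ.prod τ))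
      ((μ.prod ρ).prod (ν.prod τ)) := by
  have swap_middle : MeasurePreserving (fun p : β × γ × δ => (p.2.1, p.1, p.2.2))
      (ν.prod (ρ.prod τ)) (ρ.prod (ν.prod τ)) :=
    (measurePreserving_prodAssoc ρ ν τ).comp <|
      (Measure.measurePreserving_swap.prod (.id τ)).comp (measurePreserving_prodAssoc ν ρ τ).symm
  exact (measurePreserving_prodAssoc μ ρ (ν.prod τ)).symm.comp <|
    ((MeasurePreserving.id μ).prod swap_middle).comp (measurePreserving_prodAssoc μ ν (ρ.prod τ))

theorem ae_ae_swap_of_ae_prod [SFinite μ] [SFinite ν] {p : α × β → Prop}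
    (h : ∀ᵐ z ∂μ.prod ν, p z) : ∀ᵐ b ∂ν, ∀ᵐ a ∂μ, p (a, b) :=
  Measure.ae_ae_of_ae_prod (Measure.measurePreserving_swap.quasiMeasurePreserving.ae h)

theorem ae_prod_and {p : α → Prop} {r : β → Prop} (hp : ∀ᵐ a ∂μ, p a)
    (hr : ∀ᵐ b ∂ν, r b) : ∀ᵐ z ∂μ.prod ν, p z.1 ∧ r z.2 :=
  (Measure.quasiMeasurePreserving_fst.ae hp).and (Measure.quasiMeasurePreserving_snd.ae hr)

end ProductMeasures

theorem locallyIntegrable_of_norm_le {α E : Type*} [TopologicalSpace α] [MeasurableSpace α]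
    {μ : Measure α} [IsLocallyFiniteMeasure μ] [NormedAddCommGroup E] {f : α → E} {C : ℝ}
    (hf : AEStronglyMeasurable f μ) (hC : ∀ a, ‖f a‖ ≤ C) : LocallyIntegrable f μ :=
  (memLp_top_of_bound hf C (Eventually.of_forall hC)).locallyIntegrable le_top

theorem exists_lipschitzWith_uncurry_iff {α β γ : Type*} [PseudoMetricSpace α]
    [PseudoMetricSpace β] [PseudoMetricSpace γ] {f : α → β → γ} :
    (∃ K, LipschitzWith K (uncurry f)) ↔
      ∃ C : ℝ, (∀ a b b', dist (f a b) (f a b') ≤ C * dist b b') ∧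
        ∀ b a a', dist (f a b) (f a' b) ≤ C * dist a a' := by
  constructor
  · rintro ⟨K, hK⟩
    refine ⟨K, fun a b b' => ?_, fun b a a' => ?_⟩
    · simpa using (hK.dist_le_mul (a, b) (a, b'))
    · simpa using (hK.dist_le_mul (a, b) (a', b))
  · rintro ⟨C, hβ, hα⟩
    exact ⟨C.toNNReal + C.toNNReal, LipschitzWith.uncurry
      (fun b => LipschitzWith.of_dist_le' (hα b)) fun a => LipschitzWith.of_dist_le' (hβ a)⟩

theorem exists_lipschitzWith_ae_eq_slices {α β : Type*} [PseudoMetricSpace α]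
    [PseudoMetricSpace β] [MeasurableSpace α] [MeasurableSpace β] {μ : Measure α} {ν : Measure β}
    [SFinite μ] [SFinite ν] [μ.IsOpenPosMeasure] [ν.IsOpenPosMeasure] {f g : α × β → ℝ}
    {K L : ℝ≥0} (hf : ∀ b, LipschitzWith K fun a => f (a, b))
    (hg : ∀ a, LipschitzWith L fun b => g (a, b)) (hfg : f =ᵐ[μ.prod ν] g) :
    ∃ h : α × β → ℝ, LipschitzWith (K + L) h ∧
      (∀ᵐ a ∂μ, ∀ b, h (a, b) = g (a, b)) ∧ ∀ᵐ b ∂ν, ∀ a, h (a, b) = f (a, b) := by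
  set S : Set α := {a | ∀ᵐ b ∂ν, f (a, b) = g (a, b)}
  have hS : ∀ᵐ a ∂μ, a ∈ S := Measure.ae_ae_of_ae_prod hfg
  -- For `a` and `a'` in `S`, the estimate passes from `f` to `g` at a.e. `b`, hence at every `b`.
  have g_lip_fst : ∀ b, LipschitzWith K fun a : S => g (a, b) := by
    refine fun b => LipschitzWith.of_dist_le_mul fun a a' => ?_
    have closed : IsClosed {b | dist (g (a, b)) (g (a', b)) ≤ K * dist a a'} :=
      isClosed_le ((hg a).continuous.dist (hg a').continuous) continuous_const
    have dense : Dense {b | dist (g (a, b)) (g (a', b)) ≤ K * dist a a'} := by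
      apply Measure.dense_of_ae (μ := ν)
      filter_upwards [a.2, a'.2] with b hb hb'
      rw [← hb, ← hb']
      exact (hf b).dist_le_mul a a'
    exact closed.closure_subset (dense b)
  have g_lip : LipschitzOnWith (K + L) g (S ×ˢ univ) := fun z hz z' hz' =>
    LipschitzWith.uncurry g_lip_fst (fun a => hg a) (⟨z.1, hz.1⟩, z.2) (⟨z'.1, hz'.1⟩, z'.2)
  obtain ⟨h, h_lip, g_eq_h⟩ := g_lip.extend_real
  have h_eq_g : ∀ a ∈ S, ∀ b, h (a, b) = g (a, b) := fun a ha b =>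
    (g_eq_h (show (a, b) ∈ S ×ˢ univ from ⟨ha, mem_univ b⟩)).symm
  refine ⟨h, h_lip, hS.mono h_eq_g, ?_⟩
  filter_upwards [ae_ae_swap_of_ae_prod hfg] with b hb
  refine congrFun (Measure.eq_of_ae_eq (μ := μ) ?_ (h_lip.continuous.comp (by fun_prop))
    (hf b).continuous)
  filter_upwards [hS, hb] with a ha hab
  exact (h_eq_g a ha b).trans hab.symm

section IndefiniteIntegrals

variable {E : Type*} [NormedAddCommGroup E] {f g : ℝ → E}

theorem intervalIntegrable_of_locallyIntegrable (hf : LocallyIntegrable f) (a b : ℝ) :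
    IntervalIntegrable f volume a b :=
  (hf.integrableOn_isCompact isCompact_uIcc).intervalIntegrable

variable [NormedSpace ℝ E]

theorem integral_sub_integral (hf : LocallyIntegrable f) (c a b : ℝ) :
    (∫ x in c..b, f x) - ∫ x in c..a, f x = ∫ x in a..b, f x :=
  intervalIntegral.integral_interval_sub_left (intervalIntegrable_of_locallyIntegrable hf c b)
    (intervalIntegrable_of_locallyIntegrable hf c a)

theorem lipschitzWith_of_sub_eq_integral {C : ℝ≥0} (hC : ∀ x, ‖f x‖ ≤ C)
    (hg : ∀ a b, g b - g a = ∫ x in a..b, f x) : LipschitzWith C g := by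
  refine LipschitzWith.of_dist_le_mul fun b a => ?_
  rw [dist_eq_norm, hg, Real.dist_eq]
  exact intervalIntegral.norm_integral_le_of_norm_le_const fun x _ => hC x

theorem ae_hasDerivAt_of_sub_eq_integral [CompleteSpace E] (hf : LocallyIntegrable f)
    (hg : ∀ a b, g b - g a = ∫ x in a..b, f x) : ∀ᵐ x, HasDerivAt g (f x) x := by
  have g_eq : g = fun x => (∫ y in (0 : ℝ)..x, f y) + g 0 := by
    ext x
    rw [← hg, sub_add_cancel]
  filter_upwards [LocallyIntegrable.ae_hasDerivAt_integral hf] with x hx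
  rw [g_eq]
  exact (hx 0).add_const _

end IndefiniteIntegrals

section WeakDivergence

variable {E : Type*} [NormedAddCommGroup E] [NormedSpace ℝ E]

theorem fderiv_comp_smul_mul {χ φ : E → ℝ} (hχ : Differentiable ℝ χ) (hφ : Differentiable ℝ φ)
    (c : ℝ) (z : E) : fderiv ℝ (fun z => χ (c • z) * φ z) z =
      χ (c • z) • fderiv ℝ φ z + (φ z * c) • fderiv ℝ χ (c • z) := by
  rw [fderiv_fun_mul (by fun_prop) (hφ z), fderiv_comp_smul, smul_smul]

variable [FiniteDimensional ℝ E]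

theorem exists_seq_hasCompactSupport_tendsto_fderiv {φ : E → ℝ} (hφ : ContDiff ℝ ∞ φ) :
    ∃ (M : ℝ) (ψ : ℕ → E → ℝ), (∀ n, ContDiff ℝ ∞ (ψ n)) ∧ (∀ n, HasCompactSupport (ψ n)) ∧
      (∀ n z, ‖fderiv ℝ (ψ n) z‖ ≤ ‖fderiv ℝ φ z‖ + M * ‖φ z‖) ∧
      ∀ z, Tendsto (fun n => fderiv ℝ (ψ n) z) atTop (𝓝 (fderiv ℝ φ z)) := by
  let χ : ContDiffBump (0 : E) := ⟨1, 2, one_pos, one_lt_two⟩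
  have χ_smooth : ContDiff ℝ ∞ χ := χ.contDiff
  have χ'_cont : Continuous (fderiv ℝ χ) := χ_smooth.continuous_fderiv (by simp)
  obtain ⟨M, hM⟩ := (χ.hasCompactSupport.fderiv ℝ).exists_bound_of_continuous χ'_cont
  let c : ℕ → ℝ := fun n => 1 / ((n : ℝ) + 1)
  have c_pos : ∀ n, 0 < c n := fun n => Nat.one_div_pos_of_nat
  have c_tendsto : Tendsto c atTop (𝓝 0) := tendsto_one_div_add_atTop_nhds_zero_nat
  have fderiv_cutoff : ∀ n z, fderiv ℝ (fun z => χ (c n • z) * φ z) z =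
      χ (c n • z) • fderiv ℝ φ z + (φ z * c n) • fderiv ℝ χ (c n • z) := fun n =>
    fderiv_comp_smul_mul (χ_smooth.differentiable (by simp)) (hφ.differentiable (by simp)) (c n)
  refine ⟨M, fun n z => χ (c n • z) * φ z, fun n => ?_, fun n => ?_, fun n z => ?_, fun z => ?_⟩
  · exact (χ_smooth.comp (contDiff_const_smul (c n))).mul hφ
  · exact (χ.hasCompactSupport.comp_homeomorph
      (Homeomorph.smulOfNeZero (c n) (c_pos n).ne')).mul_right
  · have c_le : ‖c n‖ ≤ 1 := by
      rw [Real.norm_of_nonneg (c_pos n).le]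
      exact Nat.one_div_le_one_div n.zero_le |>.trans_eq (by simp)
    rw [fderiv_cutoff]
    refine (norm_add_le _ _).trans (add_le_add ?_ ?_)
    · rw [norm_smul, Real.norm_of_nonneg χ.nonneg]
      exact mul_le_of_le_one_left (norm_nonneg _) χ.le_one
    · rw [norm_smul, norm_mul, mul_comm M]
      exact mul_le_mul (mul_le_of_le_one_right (norm_nonneg _) c_le) (hM _) (norm_nonneg _)
        (norm_nonneg _)
  · simp only [fderiv_cutoff]
    have cz_tendsto : Tendsto (fun n => c n • z) atTop (𝓝 0) := by
      simpa using c_tendsto.smul_const z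
    have χ_tendsto : Tendsto (fun n => χ (c n • z)) atTop (𝓝 1) := by
      have := (χ_smooth.continuous.tendsto 0).comp cz_tendsto
      rwa [χ.one_of_mem_closedBall (by simp [χ])] at this
    have χ'_tendsto := (χ'_cont.tendsto 0).comp cz_tendsto
    simpa using! (χ_tendsto.smul_const (fderiv ℝ φ z)).add
      ((c_tendsto.const_mul (φ z)).smul χ'_tendsto)

variable [MeasurableSpace E] [BorelSpace E] {μ : Measure E} {F : E → E}

/-- The field `F` has zero divergence in the distributional sense: its pairing with the gradient
of every Schwartz function vanishes. -/
def IsWeaklyDivergenceFree (F : E → E) (μ : Measure E) : Prop :=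
  ∀ φ : 𝓢(E, ℝ), ∫ z, fderiv ℝ φ z (F z) ∂μ = 0

theorem isWeaklyDivergenceFree_of_hasCompactSupport [μ.HasTemperateGrowth]
    (hF : AEStronglyMeasurable F μ) {C : ℝ} (hC : ∀ᵐ z ∂μ, ‖F z‖ ≤ C)
    (h : ∀ ψ : E → ℝ, ContDiff ℝ ∞ ψ → HasCompactSupport ψ → ∫ z, fderiv ℝ ψ z (F z) ∂μ = 0) :
    IsWeaklyDivergenceFree F μ := by
  intro φ
  obtain ⟨M, ψ, ψ_smooth, ψ_supp, ψ_bound, ψ_tendsto⟩ :=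
    exists_seq_hasCompactSupport_tendsto_fderiv (φ.smooth ⊤)
  have lim : Tendsto (fun n => ∫ z, fderiv ℝ (ψ n) z (F z) ∂μ) atTop
      (𝓝 (∫ z, fderiv ℝ φ z (F z) ∂μ)) := by
    refine tendsto_integral_of_dominated_convergence
      (fun z => (‖fderiv ℝ φ z‖ + M * ‖φ z‖) * C) (fun n => ?_) ?_ (fun n => ?_) ?_
    · exact isBoundedBilinearMap_apply.continuous.comp_aestronglyMeasurable
        (((ψ_smooth n).continuous_fderiv (by simp)).aestronglyMeasurable.prodMk hF)
    · exact ((SchwartzMap.fderivCLM ℝ E ℝ φ).integrable.norm.add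
        (φ.integrable.norm.const_mul M)).mul_const C
    · filter_upwards [hC] with z hz
      exact (ContinuousLinearMap.le_opNorm _ _).trans <|
        mul_le_mul (ψ_bound n z) hz (norm_nonneg _) ((norm_nonneg _).trans (ψ_bound n z))
    · exact Eventually.of_forall fun z =>
        ((ContinuousLinearMap.apply ℝ ℝ (F z)).continuous.tendsto _).comp (ψ_tendsto z)
  refine tendsto_nhds_unique lim ?_
  simp only [h _ (ψ_smooth _) (ψ_supp _), tendsto_const_nhds]

theorem integral_lineDeriv_mul_fderiv_comm [μ.IsAddHaarMeasure] {f ψ : E → ℝ} {K : ℝ≥0}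
    (hf : LipschitzWith K f) (hψ : ContDiff ℝ 2 ψ) (hψ_supp : HasCompactSupport ψ) (v w : E) :
    ∫ z, lineDeriv ℝ f z v * fderiv ℝ ψ z w ∂μ = ∫ z, lineDeriv ℝ f z w * fderiv ℝ ψ z v ∂μ := by
  have ψ'_diff : ContDiff ℝ 1 (fderiv ℝ ψ) := hψ.fderiv_right (by norm_num)
  have by_parts : ∀ v w, ∫ z, lineDeriv ℝ f z v * fderiv ℝ ψ z w ∂μ =
      -∫ z, fderiv ℝ (fderiv ℝ ψ) z v w * f z ∂μ := by
    intro v w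
    have ψ'w_diff : ContDiff ℝ 1 fun z => fderiv ℝ ψ z w := ψ'_diff.clm_apply contDiff_const
    have ψ'w_supp : HasCompactSupport fun z => fderiv ℝ ψ z w := hψ_supp.fderiv_apply ℝ w
    obtain ⟨L, ψ'w_lip⟩ := ψ'w_diff.lipschitzWith_of_hasCompactSupport ψ'w_supp one_ne_zero
    rw [hf.integral_lineDeriv_mul_eq ψ'w_lip ψ'w_supp, ← integral_neg]
    congr 1 with z
    rw [(ψ'w_diff.differentiable one_ne_zero z).lineDeriv_eq_fderiv,
      fderiv_clm_apply (ψ'_diff.differentiable one_ne_zero z) (differentiableAt_const w)]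
    simp
  have symm : ∀ z, fderiv ℝ (fderiv ℝ ψ) z v w = fderiv ℝ (fderiv ℝ ψ) z w v := fun z =>
    hψ.contDiffAt.isSymmSndFDerivAt (by simp) v w
  rw [by_parts, by_parts]
  simp only [symm]

theorem trace_fderiv_convolution_eq_zero [μ.IsAddHaarMeasure] {ρ : E → ℝ}
    (hρ : ContDiff ℝ ∞ ρ) (hρ_supp : HasCompactSupport ρ) (hF : LocallyIntegrable F μ)
    (hF_div : IsWeaklyDivergenceFree F μ) (z : E) :
    LinearMap.trace ℝ E
      (fderiv ℝ (ρ ⋆[ContinuousLinearMap.lsmul ℝ ℝ, μ] F) z : E →L[ℝ] E) = 0 := by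
  let tr : (E →L[ℝ] E) →L[ℝ] ℝ :=
    LinearMap.toContinuousLinearMap (LinearMap.trace ℝ E ∘ₗ ContinuousLinearMap.coeLM ℝ)
  have ρ_diff : ContDiff ℝ 1 ρ := hρ.of_le (by simp)
  have integrable : Integrable (fun y => (fderiv ℝ ρ (z - y)).smulRight (F y)) μ :=
    ((hρ_supp.fderiv ℝ).convolutionExists_left
      ((ContinuousLinearMap.lsmul ℝ ℝ).precompL E) (ρ_diff.continuous_fderiv one_ne_zero)
      hF z).integrable_swap
  let φ : 𝓢(E, ℝ) := HasCompactSupport.toSchwartzMap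
    (hρ_supp.comp_homeomorph (Homeomorph.subLeft z)) (hρ.comp (contDiff_const.sub contDiff_id))
  have fderiv_φ : ∀ y, fderiv ℝ φ y = -fderiv ℝ ρ (z - y) := by
    intro y
    have := ((ρ_diff.differentiable one_ne_zero (z - y)).hasFDerivAt.comp y
      ((hasFDerivAt_id y).const_sub z)).fderiv
    simpa using! this
  calc tr (fderiv ℝ (ρ ⋆[ContinuousLinearMap.lsmul ℝ ℝ, μ] F) z)
      = tr (∫ y, (fderiv ℝ ρ (z - y)).smulRight (F y) ∂μ) := by
        rw [(hρ_supp.hasFDerivAt_convolution_left _ ρ_diff hF z).fderiv, convolution_eq_swap]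
        rfl
    _ = ∫ y, fderiv ℝ ρ (z - y) (F y) ∂μ := by
        rw [← tr.integral_comp_comm integrable]
        exact integral_congr_ae (Eventually.of_forall fun y =>
          LinearMap.trace_smulRight (fderiv ℝ ρ (z - y) : E →ₗ[ℝ] ℝ) (F y))
    _ = -∫ y, fderiv ℝ φ y (F y) ∂μ := by
        simp only [fderiv_φ, neg_apply, integral_neg, neg_neg]
    _ = 0 := by rw [hF_div φ, neg_zero]

end WeakDivergence

section Mollification

variable {E G : Type*} [NormedAddCommGroup E] [NormedSpace ℝ E] [FiniteDimensional ℝ E]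
  [MeasurableSpace E] [BorelSpace E] {μ : Measure E} [μ.IsAddHaarMeasure]
  [NormedAddCommGroup G] [NormedSpace ℝ G] {F : E → G}

/-- A bump function supported in the closed ball of radius `2 / (n + 1)`. The ratio of its two radii
does not depend on `n`, so that mollifications converge at every Lebesgue point. -/
noncomputable def shrinkingBump (E : Type*) [NormedAddCommGroup E] (n : ℕ) :
    ContDiffBump (0 : E) where
  rIn := 1 / ((n : ℝ) + 1)
  rOut := 2 * (1 / ((n : ℝ) + 1))
  rIn_pos := Nat.one_div_pos_of_nat
  rIn_lt_rOut := lt_mul_of_one_lt_left Nat.one_div_pos_of_nat one_lt_two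

/-- The `n`-th mollification of `F`: its convolution with the normalized `shrinkingBump`. -/
noncomputable def mollify (μ : Measure E) (F : E → G) (n : ℕ) : E → G :=
  (shrinkingBump E n).normed μ ⋆[ContinuousLinearMap.lsmul ℝ ℝ, μ] F

theorem differentiable_mollify (hF : LocallyIntegrable F μ) (n : ℕ) :
    Differentiable ℝ (mollify μ F n) := fun z =>
  ((shrinkingBump E n).hasCompactSupport_normed.hasFDerivAt_convolution_left _
    (shrinkingBump E n).contDiff_normed hF z).differentiableAt

theorem norm_mollify_le {C : ℝ} (hC : ∀ z, ‖F z‖ ≤ C) (n : ℕ) (z : E) : ‖mollify μ F n z‖ ≤ C := by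
  let ρ := (shrinkingBump E n).normed μ
  calc ‖mollify μ F n z‖ ≤ ∫ y, ρ y * C ∂μ := by
        refine norm_integral_le_of_norm_le
          ((shrinkingBump E n).integrable_normed.mul_const C) (Eventually.of_forall fun y => ?_)
        rw [ContinuousLinearMap.lsmul_apply, norm_smul,
          Real.norm_of_nonneg ((shrinkingBump E n).nonneg_normed y)]
        exact mul_le_mul_of_nonneg_left (hC _) ((shrinkingBump E n).nonneg_normed y)
    _ = C := by rw [integral_mul_const, (shrinkingBump E n).integral_normed, one_mul]

theorem ae_tendsto_mollify [CompleteSpace G] (hF : LocallyIntegrable F μ) :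
    ∀ᵐ z ∂μ, Tendsto (fun n => mollify μ F n z) atTop (𝓝 (F z)) := by
  refine ContDiffBump.ae_convolution_tendsto_right_of_locallyIntegrable (K := 2) ?_
    (Eventually.of_forall fun n => le_rfl) hF
  simpa [shrinkingBump] using tendsto_one_div_add_atTop_nhds_zero_nat.const_mul (2 : ℝ)

theorem IsWeaklyDivergenceFree.trace_fderiv_mollify_eq_zero {F : E → E}
    (hF_div : IsWeaklyDivergenceFree F μ) (hF : LocallyIntegrable F μ) (n : ℕ) (z : E) :
    LinearMap.trace ℝ E (fderiv ℝ (mollify μ F n) z : E →L[ℝ] E) = 0 :=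
  trace_fderiv_convolution_eq_zero (shrinkingBump E n).contDiff_normed
    (shrinkingBump E n).hasCompactSupport_normed hF hF_div z

end Mollification

section Plane

theorem trace_prod_self {R : Type*} [CommRing R] (L : R × R →ₗ[R] R × R) :
    LinearMap.trace R (R × R) L = (L (1, 0)).1 + (L (0, 1)).2 := by
  rw [LinearMap.trace_eq_matrix_trace R (Module.Basis.finTwoProd R), Matrix.trace_fin_two]
  simp [LinearMap.toMatrix_apply]

theorem map_eq_mul_fst_add_mul_snd {R 𝓕 : Type*} [CommSemiring R] [FunLike 𝓕 (R × R) R]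
    [LinearMapClass 𝓕 R (R × R) R] (L : 𝓕) (v : R × R) :
    L v = L (1, 0) * v.1 + L (0, 1) * v.2 := by
  have v_eq : v = v.1 • (1, 0) + v.2 • (0, 1) := by ext <;> simp
  conv_lhs => rw [v_eq, map_add, map_smul, map_smul, smul_eq_mul, smul_eq_mul]
  ring

variable {F : ℝ × ℝ → ℝ × ℝ} {C : ℝ}

theorem isWeaklyDivergenceFree_prod_iff {μ : Measure (ℝ × ℝ)} :
    IsWeaklyDivergenceFree F μ ↔ ∀ φ : 𝓢(ℝ × ℝ, ℝ),
      ∫ z, (fderiv ℝ φ z (1, 0) * (F z).1 + fderiv ℝ φ z (0, 1) * (F z).2) ∂μ = 0 := by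
  simp only [← map_eq_mul_fst_add_mul_snd, IsWeaklyDivergenceFree]

/-- The flux of the planar field `F = (q, j)` out of the rectangle `[t₁, t₂] × [x₁, x₂]`, where
`w = ((x₁, x₂), (t₁, t₂))`. -/
noncomputable def netFlux (F : ℝ × ℝ → ℝ × ℝ) (w : (ℝ × ℝ) × ℝ × ℝ) : ℝ :=
  ((∫ x in w.1.1..w.1.2, (F (w.2.2, x)).1) - ∫ x in w.1.1..w.1.2, (F (w.2.1, x)).1) +
    ((∫ t in w.2.1..w.2.2, (F (t, w.1.2)).2) - ∫ t in w.2.1..w.2.2, (F (t, w.1.1)).2)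

theorem locallyIntegrable_fst_slice (hF : Measurable F) (hC : ∀ z, ‖F z‖ ≤ C) (t : ℝ) :
    LocallyIntegrable fun x => (F (t, x)).1 :=
  locallyIntegrable_of_norm_le (Measurable.aestronglyMeasurable (by fun_prop)) fun x =>
    (norm_fst_le _).trans (hC (t, x))

theorem locallyIntegrable_snd_slice (hF : Measurable F) (hC : ∀ z, ‖F z‖ ≤ C) (x : ℝ) :
    LocallyIntegrable fun t => (F (t, x)).2 :=
  locallyIntegrable_of_norm_le (Measurable.aestronglyMeasurable (by fun_prop)) fun t =>
    (norm_snd_le _).trans (hC (t, x))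

theorem netFlux_eq_integral_sub (hF : Measurable F) (hC : ∀ z, ‖F z‖ ≤ C)
    (w : (ℝ × ℝ) × ℝ × ℝ) : netFlux F w =
      (∫ x in w.1.1..w.1.2, ((F (w.2.2, x)).1 - (F (w.2.1, x)).1)) +
        ∫ t in w.2.1..w.2.2, ((F (t, w.1.2)).2 - (F (t, w.1.1)).2) := by
  have q_int := fun t => intervalIntegrable_of_locallyIntegrable
    (locallyIntegrable_fst_slice hF hC t) w.1.1 w.1.2
  have j_int := fun x => intervalIntegrable_of_locallyIntegrable
    (locallyIntegrable_snd_slice hF hC x) w.2.1 w.2.2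
  rw [netFlux, intervalIntegral.integral_sub (q_int _) (q_int _),
    intervalIntegral.integral_sub (j_int _) (j_int _)]

theorem netFlux_eq_zero_of_trace_fderiv_eq_zero (hF : Differentiable ℝ F)
    (hF_div : ∀ z, LinearMap.trace ℝ (ℝ × ℝ) (fderiv ℝ F z : ℝ × ℝ →L[ℝ] ℝ × ℝ) = 0)
    (w : (ℝ × ℝ) × ℝ × ℝ) : netFlux F w = 0 := by
  have div_eq_zero : ∀ z, (fderiv ℝ F z (1, 0)).1 + (fderiv ℝ F z (0, 1)).2 = 0 := fun z =>
    (trace_prod_self _).symm.trans (hF_div z)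
  have flux := integral2_divergence_prod_of_hasFDerivAt (fun z => (F z).1) (fun z => (F z).2)
    (fun z => .fst ℝ ℝ ℝ ∘L fderiv ℝ F z) (fun z => .snd ℝ ℝ ℝ ∘L fderiv ℝ F z)
    w.2.1 w.1.1 w.2.2 w.1.2 hF.continuous.fst.continuousOn hF.continuous.snd.continuousOn
    (fun z _ => (hF z).hasFDerivAt.fst) (fun z _ => (hF z).hasFDerivAt.snd)
    (by simp [div_eq_zero])
  simp only [ContinuousLinearMap.comp_apply, ContinuousLinearMap.coe_fst',
    ContinuousLinearMap.coe_snd', div_eq_zero, intervalIntegral.integral_zero] at flux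
  rw [netFlux]
  linarith

theorem ae_tendsto_intervalIntegral_slice {α G : Type*} [MeasurableSpace α] {μ : Measure α}
    [NormedAddCommGroup G] [NormedSpace ℝ G] {f : ℕ → α × ℝ → G} {g : α × ℝ → G}
    (hf : ∀ n, StronglyMeasurable (f n)) (hC : ∀ n z, ‖f n z‖ ≤ C)
    (hfg : ∀ᵐ z ∂μ.prod volume, Tendsto (fun n => f n z) atTop (𝓝 (g z))) :
    ∀ᵐ s ∂μ, ∀ a b, Tendsto (fun n => ∫ x in a..b, f n (s, x)) atTop
      (𝓝 (∫ x in a..b, g (s, x))) := by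
  filter_upwards [Measure.ae_ae_of_ae_prod hfg] with s hs a b
  refine intervalIntegral.tendsto_integral_filter_of_dominated_convergence (fun _ => C)
    (Eventually.of_forall fun n => ?_)
    (Eventually.of_forall fun n => Eventually.of_forall fun x _ => hC n (s, x))
    intervalIntegrable_const (hs.mono fun x hx _ => hx)
  exact ((hf n).comp_measurable measurable_prodMk_left).aestronglyMeasurable

theorem ae_tendsto_netFlux {F : ℕ → ℝ × ℝ → ℝ × ℝ} {F₀ : ℝ × ℝ → ℝ × ℝ}
    (hF : ∀ n, StronglyMeasurable (F n)) (hC : ∀ n z, ‖F n z‖ ≤ C)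
    (hF₀ : ∀ᵐ z, Tendsto (fun n => F n z) atTop (𝓝 (F₀ z))) :
    ∀ᵐ w, Tendsto (fun n => netFlux (F n) w) atTop (𝓝 (netFlux F₀ w)) := by
  have lim_fst := ae_tendsto_intervalIntegral_slice (fun n => (hF n).fst)
    (fun n z => (norm_fst_le _).trans (hC n z)) (hF₀.mono fun z hz => hz.fst_nhds)
  have lim_snd := ae_tendsto_intervalIntegral_slice
    (fun n => (hF n).snd.comp_measurable measurable_swap)
    (fun n z => (norm_snd_le _).trans (hC n z.swap))
    (Measure.measurePreserving_swap.quasiMeasurePreserving.ae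
      (hF₀.mono fun z hz => hz.snd_nhds))
  filter_upwards [ae_prod_and (ae_prod_and lim_snd lim_snd) (ae_prod_and lim_fst lim_fst)]
    with w ⟨⟨lim_x₁, lim_x₂⟩, lim_t₁, lim_t₂⟩
  exact ((lim_t₂ _ _).sub (lim_t₁ _ _)).add ((lim_x₂ _ _).sub (lim_x₁ _ _))

theorem IsWeaklyDivergenceFree.ae_netFlux_eq_zero (hF_div : IsWeaklyDivergenceFree F volume)
    (hF : Measurable F) (hC : ∀ z, ‖F z‖ ≤ C) : ∀ᵐ w, netFlux F w = 0 := by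
  have hF_int : LocallyIntegrable F := locallyIntegrable_of_norm_le hF.aestronglyMeasurable hC
  have mollify_diff := differentiable_mollify hF_int
  filter_upwards [ae_tendsto_netFlux (fun n => (mollify_diff n).continuous.stronglyMeasurable)
    (norm_mollify_le hC) (ae_tendsto_mollify hF_int)] with w hw
  refine tendsto_nhds_unique hw (tendsto_const_nhds.congr fun n => ?_)
  exact (netFlux_eq_zero_of_trace_fderiv_eq_zero (mollify_diff n)
    (hF_div.trace_fderiv_mollify_eq_zero hF_int n) w).symm

theorem exists_base_point_netFlux_eq_zero (h : ∀ᵐ w, netFlux F w = 0) :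
    ∃ t₀ x₀, ∀ᵐ z : ℝ × ℝ, netFlux F ((x₀, z.2), (t₀, z.1)) = 0 := by
  have corners : ∀ᵐ p : (ℝ × ℝ) × ℝ × ℝ, netFlux F ((p.1.1, p.2.1), (p.1.2, p.2.2)) = 0 :=
    (measurePreserving_prodProdProdComm volume volume volume volume).quasiMeasurePreserving.ae h
  obtain ⟨⟨x₀, t₀⟩, base⟩ := (Measure.ae_ae_of_ae_prod corners).exists
  exact ⟨t₀, x₀, Measure.measurePreserving_swap.quasiMeasurePreserving.ae base⟩

theorem exists_ae_eq_of_ae_netFlux_eq_zero (hF : Measurable F) (hC : ∀ z, ‖F z‖ ≤ C)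
    (h : ∀ᵐ w, netFlux F w = 0) :
    ∃ N₁ N₂ : ℝ × ℝ → ℝ, (∀ x a b, N₁ (b, x) - N₁ (a, x) = ∫ s in a..b, -(F (s, x)).2) ∧
      (∀ t a b, N₂ (t, b) - N₂ (t, a) = ∫ y in a..b, (F (t, y)).1) ∧ N₁ =ᵐ[volume] N₂ := by
  obtain ⟨t₀, x₀, base⟩ := exists_base_point_netFlux_eq_zero h
  let Q : ℝ → ℝ → ℝ := fun t x => ∫ y in x₀..x, (F (t, y)).1
  let J : ℝ → ℝ → ℝ := fun x t => ∫ s in t₀..t, -(F (s, x)).2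
  refine ⟨fun z => Q t₀ z.2 + J z.2 z.1, fun z => Q z.1 z.2 + J x₀ z.1, fun x a b => ?_,
    fun t a b => ?_, ?_⟩
  · rw [add_sub_add_left_eq_sub]
    exact integral_sub_integral (locallyIntegrable_snd_slice hF hC x).neg t₀ a b
  · rw [add_sub_add_right_eq_sub]
    exact integral_sub_integral (locallyIntegrable_fst_slice hF hC t) x₀ a b
  · filter_upwards [base] with z hz
    simp only [netFlux] at hz
    simp only [Q, J, intervalIntegral.integral_neg]
    linarith

/-- The function `N` is a stream function of the planar field `F = (q, j)`, in the sense that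
`∂N/∂x = q` and `∂N/∂t = -j`, both integrated along almost every coordinate line. -/
def IsStreamFunction (F : ℝ × ℝ → ℝ × ℝ) (N : ℝ × ℝ → ℝ) : Prop :=
  (∀ᵐ t : ℝ, ∀ x x', N (t, x) - N (t, x') = ∫ y in x'..x, (F (t, y)).1) ∧
    ∀ᵐ x : ℝ, ∀ t t', N (t, x) - N (t', x) = ∫ s in t'..t, -(F (s, x)).2

variable {N : ℝ × ℝ → ℝ}

theorem exists_isStreamFunction {C : ℝ≥0} (hF : Measurable F) (hC : ∀ z, ‖F z‖ ≤ C)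
    (h : ∀ᵐ w, netFlux F w = 0) :
    ∃ N, N (0, 0) = 0 ∧ LipschitzWith (C + C) N ∧ IsStreamFunction F N := by
  obtain ⟨N₁, N₂, N₁_sub, N₂_sub, N₁_ae_eq⟩ := exists_ae_eq_of_ae_netFlux_eq_zero hF hC h
  have N₁_lip : ∀ x, LipschitzWith C fun t => N₁ (t, x) := fun x =>
    lipschitzWith_of_sub_eq_integral
      (fun s => (norm_neg _).trans_le ((norm_snd_le _).trans (hC (s, x)))) (N₁_sub x)
  have N₂_lip : ∀ t, LipschitzWith C fun x => N₂ (t, x) := fun t =>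
    lipschitzWith_of_sub_eq_integral (fun y => (norm_fst_le _).trans (hC (t, y))) (N₂_sub t)
  obtain ⟨N, N_lip, N_eq_N₂, N_eq_N₁⟩ := exists_lipschitzWith_ae_eq_slices N₁_lip N₂_lip N₁_ae_eq
  refine ⟨fun z => N z - N (0, 0), sub_self _, ?_, ?_, ?_⟩
  · simpa using N_lip.sub (LipschitzWith.const (N (0, 0)))
  · filter_upwards [N_eq_N₂] with t ht x x'
    rw [sub_sub_sub_cancel_right, ht, ht, N₂_sub]
  · filter_upwards [N_eq_N₁] with x hx t t'
    rw [sub_sub_sub_cancel_right, hx, hx, N₁_sub]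

theorem IsStreamFunction.ae_lineDeriv_eq_fst (h : IsStreamFunction F N)
    (hN : Continuous N) (hF : Measurable F) (hC : ∀ z, ‖F z‖ ≤ C) :
    ∀ᵐ z, lineDeriv ℝ N z (0, 1) = (F z).1 := by
  refine (Measure.ae_prod_iff_ae_ae (measurableSet_eq_fun (measurable_lineDeriv hN) hF.fst)).2 ?_
  filter_upwards [h.1] with t ht
  filter_upwards [ae_hasDerivAt_of_sub_eq_integral (locallyIntegrable_fst_slice hF hC t)
    fun a b => ht b a] with x hx
  have shifted : HasDerivAt (fun s => N (t, x + s)) (F (t, x)).1 0 :=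
    HasDerivAt.comp_const_add x 0 (by simpa using hx)
  simpa [lineDeriv] using shifted.deriv

theorem IsStreamFunction.ae_lineDeriv_eq_neg_snd (h : IsStreamFunction F N)
    (hN : Continuous N) (hF : Measurable F) (hC : ∀ z, ‖F z‖ ≤ C) :
    ∀ᵐ z, lineDeriv ℝ N z (1, 0) = -(F z).2 := by
  have meas : MeasurableSet {z | lineDeriv ℝ N z (1, 0) = -(F z).2} :=
    measurableSet_eq_fun (measurable_lineDeriv hN) hF.snd.neg
  refine (Measure.ae_prod_iff_ae_ae meas).2 ((Measure.ae_ae_comm meas).2 ?_)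
  filter_upwards [h.2] with x hx
  filter_upwards [ae_hasDerivAt_of_sub_eq_integral (locallyIntegrable_snd_slice hF hC x).neg
    fun a b => hx b a] with t ht
  have shifted : HasDerivAt (fun s => N (t + s, x)) (-(F (t, x)).2) 0 :=
    HasDerivAt.comp_const_add t 0 (by simpa using ht)
  simpa [lineDeriv] using shifted.deriv

theorem IsStreamFunction.isWeaklyDivergenceFree {K : ℝ≥0} (h : IsStreamFunction F N)
    (hN : LipschitzWith K N) (hF : Measurable F) (hC : ∀ z, ‖F z‖ ≤ C) :
    IsWeaklyDivergenceFree F volume := by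
  refine isWeaklyDivergenceFree_of_hasCompactSupport hF.aestronglyMeasurable
    (Eventually.of_forall hC) fun ψ ψ_smooth ψ_supp => ?_
  have integrable : ∀ v w, Integrable fun z => lineDeriv ℝ N z v * fderiv ℝ ψ z w := fun v w =>
    have ψ'_cont := (ψ_smooth.continuous_fderiv (by simp)).clm_apply continuous_const
    (ψ'_cont.integrable_of_hasCompactSupport (ψ_supp.fderiv_apply ℝ w)).mul_of_top_right
      (hN.memLp_lineDeriv v)
  calc ∫ z, fderiv ℝ ψ z (F z)
      = ∫ z, (lineDeriv ℝ N z (0, 1) * fderiv ℝ ψ z (1, 0) -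
          lineDeriv ℝ N z (1, 0) * fderiv ℝ ψ z (0, 1)) := by
        apply integral_congr_ae
        filter_upwards [h.ae_lineDeriv_eq_fst hN.continuous hF hC,
          h.ae_lineDeriv_eq_neg_snd hN.continuous hF hC] with z hx ht
        rw [hx, ht, map_eq_mul_fst_add_mul_snd]
        ring
    _ = 0 := by
        rw [integral_sub (integrable _ _) (integrable _ _),
          integral_lineDeriv_mul_fderiv_comm hN (contDiff_infty.1 ψ_smooth 2) ψ_supp,
          sub_self]

theorem isWeaklyDivergenceFree_tfae {C : ℝ≥0} (hF : Measurable F) (hC : ∀ z, ‖F z‖ ≤ C) :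
    List.TFAE [IsWeaklyDivergenceFree F volume, ∀ᵐ w, netFlux F w = 0,
      ∃ N, N (0, 0) = 0 ∧ (∃ K, LipschitzWith K N) ∧ IsStreamFunction F N] := by
  tfae_have 1 → 2 := fun h => h.ae_netFlux_eq_zero hF hC
  tfae_have 2 → 3 := fun h =>
    have ⟨N, N_zero, N_lip, hN⟩ := exists_isStreamFunction hF hC h
    ⟨N, N_zero, ⟨C + C, N_lip⟩, hN⟩
  tfae_have 3 → 1 := fun ⟨_, _, ⟨_, N_lip⟩, hN⟩ => hN.isWeaklyDivergenceFree N_lip hF hC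
  tfae_finish

end Plane

end ContinuityEquation

/-- Equivalence of weak formulations of the conservation law
`∂_t q + ∂_x j = 0` for bounded measurable density `q` and current `j`:
(i) the weak (Schwartz-test-function) form, (ii) the partial integral form (vanishing
of rectangular contour integrals for a.e. rectangle), and (iii) the partial potential
form (existence of a Lipschitz potential `N` with `N(0,0)=0`, `∂N/∂x = q` for a.e. `t`
and all `x,x'` in integrated form, `∂N/∂t = -j` for a.e. `x` in integrated form). -/
theorem stmt_17
    (q j : ℝ → ℝ → ℝ)
    (hq_meas : Measurable (Function.uncurry q))
    (hj_meas : Measurable (Function.uncurry j))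
    (hq_bdd : ∃ C, ∀ t x, |q t x| ≤ C)
    (hj_bdd : ∃ C, ∀ t x, |j t x| ≤ C) :
    -- (i) ↔ (ii)
    ((∀ φ : SchwartzMap (ℝ × ℝ) ℝ,
        (∫ z : ℝ × ℝ, (fderiv ℝ (⇑φ) z ((1 : ℝ), (0 : ℝ)) * q z.1 z.2
          + fderiv ℝ (⇑φ) z ((0 : ℝ), (1 : ℝ)) * j z.1 z.2)) = 0)
      ↔ (∀ᵐ w ∂(volume : Measure ((ℝ × ℝ) × ℝ × ℝ)),
          (∫ x in w.1.1..w.1.2, (q w.2.2 x - q w.2.1 x))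
            + (∫ t in w.2.1..w.2.2, (j t w.1.2 - j t w.1.1)) = 0)) ∧
    -- (ii) ↔ (iii)
    ((∀ᵐ w ∂(volume : Measure ((ℝ × ℝ) × ℝ × ℝ)),
        (∫ x in w.1.1..w.1.2, (q w.2.2 x - q w.2.1 x))
          + (∫ t in w.2.1..w.2.2, (j t w.1.2 - j t w.1.1)) = 0)
      ↔ (∃ N : ℝ → ℝ → ℝ, N 0 0 = 0 ∧
          (∃ C, (∀ t x x', |N t x - N t x'| ≤ C * |x - x'|) ∧
                (∀ x t t', |N t x - N t' x| ≤ C * |t - t'|)) ∧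
          (∀ᵐ t ∂(volume : Measure ℝ), ∀ x x', N t x - N t x' = ∫ y in x'..x, q t y) ∧
          (∀ᵐ x ∂(volume : Measure ℝ), ∀ t t', N t x - N t' x = ∫ s in t'..t, -(j s x)))) := by
  obtain ⟨C, hC⟩ := hq_bdd
  obtain ⟨D, hD⟩ := hj_bdd
  let F : ℝ × ℝ → ℝ × ℝ := fun z => (q z.1 z.2, j z.1 z.2)
  have hF : Measurable F := hq_meas.prodMk hj_meas
  have F_le : ∀ z, ‖F z‖ ≤ (max C D).toNNReal := fun z =>
    (max_le_max (hC z.1 z.2) (hD z.1 z.2)).trans (Real.le_coe_toNNReal _)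
  have tfae := ContinuityEquation.isWeaklyDivergenceFree_tfae hF F_le
  have weak_iff_integral := tfae.out 0 1
  have integral_iff_potential := tfae.out 1 2
  simp only [ContinuityEquation.isWeaklyDivergenceFree_prod_iff,
    ContinuityEquation.netFlux_eq_integral_sub hF F_le] at weak_iff_integral integral_iff_potential
  refine ⟨weak_iff_integral, integral_iff_potential.trans ?_⟩
  refine (Equiv.curry ℝ ℝ ℝ).exists_congr fun N => and_congr_right' (and_congr_left' ?_)
  exact ContinuityEquation.exists_lipschitzWith_uncurry_iff (f := Function.curry N)
end
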